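/- Assume condition (R) and let α∈[0,1). Let ς_{γ,σ,1}(q) be the smallest positive zero of h_{γ,σ}'(·;q). Then the equation 1 + r·h_{γ,σ}''(r;q)/h_{γ,σ}'(r;q) = α has a unique root r₃ in the interval (0, ς_{γ,σ,1}(q)), and the radius of convexity of order α of h_{γ,σ}(·;q) equals r₃. -/

import Mathlib

noncomputable def qPochInf (a q : ℝ) : ℝ := ∏' k : ℕ, (1 - a * q ^ k)

noncomputable def qGamma (q x : ℝ) : ℝ :=
  qPochInf q q * (1 - q) ^ (1 - x) / qPochInf (q ^ x) q

noncomputable def qML (γ σ q : ℝ) (z : ℂ) : ℂ :=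
  ∑' n : ℕ,
    (((-1) ^ n * σ ^ (2 * n) * q ^ (n * (n - 1)) / qGamma q (2 * n + γ + 1) : ℝ) : ℂ) * z ^ (2 * n)

noncomputable def qMLR (γ σ q : ℝ) (x : ℝ) : ℝ :=
  ∑' n : ℕ,
    ((-1) ^ n * σ ^ (2 * n) * q ^ (n * (n - 1)) / qGamma q (2 * n + γ + 1)) * x ^ (2 * n)

def condR (q γ : ℝ) : Prop :=
  (γ = 0 ∨ γ = 1) ∨
    (γ ∈ Set.Ioo (0 : ℝ) 2 ∧ γ ≠ 1 ∧
      1 < q⁻¹ * (1 - q) * (1 - q ^ (γ + 1)) * (1 - q ^ (γ + 2)))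

noncomputable def radiusStarlike (α : ℝ) (f : ℂ → ℂ) : ℝ :=
  sSup {r : ℝ | 0 < r ∧ ∀ z : ℂ, 0 < ‖z‖ → ‖z‖ < r →
    α < (z * deriv f z / f z).re}

noncomputable def radiusConvex (α : ℝ) (f : ℂ → ℂ) : ℝ :=
  sSup {r : ℝ | 0 < r ∧ ∀ z : ℂ, ‖z‖ < r →
    α < (1 + z * deriv (deriv f) z / deriv f z).re}

noncomputable def fML (γ σ q : ℝ) (z : ℂ) : ℂ :=
  Complex.exp ((1 / ((γ : ℂ) + 1)) *
    Complex.log (z ^ ((γ : ℂ) + 1) * (qGamma q (γ + 1) : ℂ) * qML γ σ q z))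

noncomputable def gML (γ σ q : ℝ) (z : ℂ) : ℂ :=
  z * (qGamma q (γ + 1) : ℂ) * qML γ σ q z

noncomputable def hML (γ σ q : ℝ) (z : ℂ) : ℂ :=
  z * (qGamma q (γ + 1) : ℂ) *
    ∑' n : ℕ,
      (((-1) ^ n * σ ^ (2 * n) * q ^ (n * (n - 1)) / qGamma q (2 * n + γ + 1) : ℝ) : ℂ) * z ^ n

noncomputable def hMLR (γ σ q : ℝ) (x : ℝ) : ℝ :=
  x * qGamma q (γ + 1) *
    ∑' n : ℕ,
      ((-1) ^ n * σ ^ (2 * n) * q ^ (n * (n - 1)) / qGamma q (2 * n + γ + 1)) * x ^ n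

/-! Condition (R) forces `γ ∈ {0, 1}` or `q ≤ 1 / 2`. In each case the Taylor series of `h z / z` is
a dominated limit of polynomials whose roots are all positive: for `q ≤ 1 / 2` consecutive
coefficients satisfy `4 aₙ aₙ₊₂ < aₙ₊₁²`, so the partial sums alternate in sign along an increasing
sequence (Hutchinson); for `γ ∈ {0, 1}` one gets a `q`-cosine or `q`-sine, approximated by
polynomials with `q`-binomial coefficients to which a Hermite–Biehler argument applies. By
Gauss–Lucas the same holds for `g = h'`.

For a polynomial with positive roots `a`, `-z g' / g = ∑ₐ z / (a - z)` has nonnegative Taylor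
coefficients, and this passes to the limit. Up to the first positive zero `ς` of `g` that Taylor
series converges, so `Re (1 + z g' z / g z) ≥ 1 + |z| g' |z| / g |z|` for `|z| < ς`. The right-hand
side strictly decreases from `1` to `-∞` as `|z|` runs over `[0, ς)`, and the radius of convexity is
the point where it equals `α`. -/

open Filter Topology
open scoped Polynomial PowerSeries ComplexConjugate

/-- The value at `z` of the power series `f` with real coefficients. It is defined as an
unconditional sum, so it is `0` where the series diverges. -/
noncomputable def seriesSum {𝕜 : Type*} [RCLike 𝕜] (f : ℝ⟦X⟧) (z : 𝕜) : 𝕜 :=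
  ∑' n, ((PowerSeries.coeff n f : ℝ) : 𝕜) * z ^ n

/-- `f` is the Taylor series of an entire function. -/
def IsEntire (f : ℝ⟦X⟧) : Prop :=
  ∀ r : ℝ, Summable fun n ↦ PowerSeries.coeff n f * r ^ n

section SeriesSum

variable {𝕜 : Type*} [RCLike 𝕜] {f g : ℝ⟦X⟧}

theorem seriesSum_real (f : ℝ⟦X⟧) (x : ℝ) :
    seriesSum f x = ∑' n, PowerSeries.coeff n f * x ^ n :=
  rfl

theorem summable_norm_coeff_mul_pow {z : 𝕜}
    (hf : Summable fun n ↦ PowerSeries.coeff n f * ‖z‖ ^ n) :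
    Summable fun n ↦ ‖((PowerSeries.coeff n f : ℝ) : 𝕜) * z ^ n‖ := by
  simpa only [norm_mul, norm_pow, abs_norm, RCLike.norm_ofReal, Real.norm_eq_abs] using hf.norm

theorem seriesSum_mul {z : 𝕜} (hf : Summable fun n ↦ PowerSeries.coeff n f * ‖z‖ ^ n)
    (hg : Summable fun n ↦ PowerSeries.coeff n g * ‖z‖ ^ n) :
    seriesSum (f * g) z = seriesSum f z * seriesSum g z := by
  have hf' := summable_norm_coeff_mul_pow hf
  have hg' := summable_norm_coeff_mul_pow hg
  rw [seriesSum, seriesSum, seriesSum,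
    tsum_mul_tsum_eq_tsum_sum_antidiagonal_of_summable_norm hf' hg']
  refine tsum_congr fun n ↦ ?_
  rw [PowerSeries.coeff_mul, RCLike.ofReal_sum, Finset.sum_mul]
  refine Finset.sum_congr rfl fun p hp ↦ ?_
  rw [RCLike.ofReal_mul, mul_mul_mul_comm, ← pow_add, Finset.HasAntidiagonal.mem_antidiagonal.mp hp]

theorem seriesSum_zero (f : ℝ⟦X⟧) :
    seriesSum f (0 : 𝕜) = ((PowerSeries.constantCoeff f : ℝ) : 𝕜) := by
  rw [seriesSum, tsum_eq_single 0 fun n hn ↦ by rw [zero_pow hn, mul_zero], pow_zero,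
    PowerSeries.coeff_zero_eq_constantCoeff_apply, mul_one]

theorem seriesSum_coe (P : ℝ[X]) (z : 𝕜) : seriesSum (P : ℝ⟦X⟧) z = Polynomial.aeval z P := by
  rw [Polynomial.aeval_eq_sum_range, seriesSum, tsum_eq_sum (s := Finset.range (P.natDegree + 1))]
  · simp only [Polynomial.coeff_coe, RCLike.real_smul_eq_coe_mul]
  · intro n hn
    rw [Polynomial.coeff_coe, Polynomial.coeff_eq_zero_of_natDegree_lt (by simpa using hn),
      RCLike.ofReal_zero, zero_mul]

theorem isEntire_coe (P : ℝ[X]) : IsEntire (P : ℝ⟦X⟧) := by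
  refine fun r ↦ summable_of_ne_finset_zero (s := Finset.range (P.natDegree + 1)) fun n hn ↦ ?_
  rw [Polynomial.coeff_coe, Polynomial.coeff_eq_zero_of_natDegree_lt (by simpa using hn), zero_mul]

theorem seriesSum_ofReal (f : ℝ⟦X⟧) (x : ℝ) : seriesSum f (x : ℂ) = (seriesSum f x : ℝ) := by
  rw [seriesSum_real, Complex.ofReal_tsum]
  exact tsum_congr fun n ↦ by push_cast; rfl

theorem norm_seriesSum_le (hf : ∀ n, 0 ≤ PowerSeries.coeff n f) {z : 𝕜}
    (hs : Summable fun n ↦ PowerSeries.coeff n f * ‖z‖ ^ n) :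
    ‖seriesSum f z‖ ≤ seriesSum f ‖z‖ := by
  have hs' := summable_norm_coeff_mul_pow hs
  refine (norm_tsum_le_tsum_norm hs').trans_eq (tsum_congr fun n ↦ ?_)
  rw [norm_mul, norm_pow, RCLike.norm_of_nonneg (hf n)]
  rfl

theorem IsEntire.of_coeff_succ {d : ℕ → ℝ} (hd : Tendsto d atTop (𝓝 0))
    (hf : ∀ n, PowerSeries.coeff (n + 1) f = d n * PowerSeries.coeff n f) : IsEntire f := by
  intro r
  have hdr : Tendsto (fun n ↦ ‖d n * r‖) atTop (𝓝 0) := by simpa using (hd.mul_const r).norm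
  refine summable_of_ratio_norm_eventually_le (r := 1 / 2) (by norm_num) ?_
  filter_upwards [hdr.eventually_le_const (show (0 : ℝ) < 1 / 2 by norm_num)] with n hn
  rw [hf, pow_succ, show d n * PowerSeries.coeff n f * (r ^ n * r) =
    d n * r * (PowerSeries.coeff n f * r ^ n) by ring, norm_mul]
  exact mul_le_mul_of_nonneg_right hn (norm_nonneg _)

theorem IsEntire.derivative (hf : IsEntire f) : IsEntire (d⁄dX ℝ f) := by
  intro r
  have hsum := (summable_nat_add_iff 1).mpr (hf (2 * (|r| + 1))).norm
  refine .of_norm_bounded hsum fun n ↦ ?_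
  have hn : ‖(n + 1 : ℝ)‖ ≤ 2 ^ (n + 1) := by
    rw [Real.norm_of_nonneg (by positivity)]
    exact_mod_cast Nat.lt_two_pow_self.le
  have hr : ‖r‖ ^ n ≤ (|r| + 1) ^ (n + 1) :=
    (pow_le_pow_left₀ (norm_nonneg r) (by simp) n).trans
      (pow_le_pow_right₀ (by simp) n.le_succ)
  calc ‖PowerSeries.coeff n (d⁄dX ℝ f) * r ^ n‖
      = ‖PowerSeries.coeff (n + 1) f‖ * (‖(n + 1 : ℝ)‖ * ‖r‖ ^ n) := by
        rw [PowerSeries.coeff_derivative, norm_mul, norm_mul, norm_pow, mul_assoc]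
    _ ≤ ‖PowerSeries.coeff (n + 1) f‖ * (2 ^ (n + 1) * (|r| + 1) ^ (n + 1)) := by gcongr
    _ = ‖PowerSeries.coeff (n + 1) f * (2 * (|r| + 1)) ^ (n + 1)‖ := by
        rw [norm_mul, ← mul_pow, norm_pow, Real.norm_of_nonneg (r := 2 * _) (by positivity)]

theorem IsEntire.X_mul (hf : IsEntire f) : IsEntire (PowerSeries.X * f) := by
  refine fun r ↦ (summable_nat_add_iff 1).mp ?_
  simpa only [PowerSeries.coeff_succ_X_mul, pow_succ, ← mul_assoc] using (hf r).mul_right r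

theorem seriesSum_X_mul (hf : IsEntire f) (z : 𝕜) :
    seriesSum (PowerSeries.X * f) z = z * seriesSum f z := by
  have hX : seriesSum PowerSeries.X z = z := by
    rw [← Polynomial.coe_X, seriesSum_coe, Polynomial.aeval_X]
  rw [seriesSum_mul (by simpa using isEntire_coe Polynomial.X ‖z‖) (hf _), hX]

theorem hasDerivAt_seriesSum (hf : IsEntire f) (z : 𝕜) :
    HasDerivAt (seriesSum f) (seriesSum (d⁄dX ℝ f) z) z := by
  have hsum (w : 𝕜) : Summable fun n ↦ ((PowerSeries.coeff n f : ℝ) : 𝕜) * w ^ n :=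
    (summable_norm_coeff_mul_pow (hf ‖w‖)).of_norm
  have hsplit : (seriesSum f : 𝕜 → 𝕜) = fun w ↦ ((PowerSeries.coeff 0 f : ℝ) : 𝕜) +
      ∑' n, ((PowerSeries.coeff (n + 1) f : ℝ) : 𝕜) * w ^ (n + 1) := by
    ext w
    rw [seriesSum, (hsum w).tsum_eq_zero_add, pow_zero, mul_one]
  have hterm (n : ℕ) (w : 𝕜) :
      HasDerivAt (fun w : 𝕜 ↦ ((PowerSeries.coeff (n + 1) f : ℝ) : 𝕜) * w ^ (n + 1))
        (((PowerSeries.coeff n (d⁄dX ℝ f) : ℝ) : 𝕜) * w ^ n) w := by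
    refine ((hasDerivAt_pow (n + 1) w).const_mul _).congr_deriv ?_
    rw [PowerSeries.coeff_derivative, Nat.add_sub_cancel]
    push_cast
    ring
  have hbound (n : ℕ) (w : 𝕜) (hw : w ∈ Metric.ball 0 (‖z‖ + 1)) :
      ‖((PowerSeries.coeff n (d⁄dX ℝ f) : ℝ) : 𝕜) * w ^ n‖ ≤
        ‖PowerSeries.coeff n (d⁄dX ℝ f) * (‖z‖ + 1) ^ n‖ := by
    rw [mem_ball_zero_iff] at hw
    rw [norm_mul, norm_mul, norm_pow, norm_pow, Real.norm_of_nonneg (r := ‖z‖ + 1) (by positivity),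
      RCLike.norm_ofReal, Real.norm_eq_abs]
    gcongr
  have hz : z ∈ Metric.ball 0 (‖z‖ + 1) := by simp
  have hball : IsPreconnected (Metric.ball (0 : 𝕜) (‖z‖ + 1)) :=
    (convex_ball 0 (‖z‖ + 1)).isPreconnected
  have hshift := (summable_nat_add_iff 1).mpr (hsum z)
  have hderiv := hasDerivAt_tsum_of_isPreconnected (𝕜 := 𝕜) (F := 𝕜)
    (hf.derivative (‖z‖ + 1)).norm Metric.isOpen_ball hball (fun n w _ ↦ hterm n w) hbound hz
    hshift hz
  rw [hsplit]
  exact hderiv.const_add _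

theorem deriv_seriesSum (hf : IsEntire f) :
    deriv (seriesSum f : 𝕜 → 𝕜) = seriesSum (d⁄dX ℝ f) :=
  funext fun z ↦ (hasDerivAt_seriesSum hf z).deriv

end SeriesSum

open scoped ComplexOrder in
/-- The real polynomial `P` is nonzero and all its complex roots are positive real numbers. -/
def PosRooted (P : ℝ[X]) : Prop :=
  ∀ z : ℂ, Polynomial.aeval z P = 0 → 0 < z

namespace PosRooted

open scoped ComplexOrder

variable {P Q : ℝ[X]}

theorem coeff_zero_ne_zero (hP : PosRooted P) : P.coeff 0 ≠ 0 := by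
  intro h
  refine (hP 0 ?_).false
  rw [← Polynomial.coeff_zero_eq_aeval_zero', h, map_zero]

theorem C_mul {c : ℝ} (hc : c ≠ 0) (hP : PosRooted P) : PosRooted (Polynomial.C c * P) := by
  intro z hz
  rw [map_mul, Polynomial.aeval_C, mul_eq_zero] at hz
  exact hP z (hz.resolve_left (by simpa using hc))

theorem comp_C_mul_X {κ : ℝ} (hκ : 0 < κ) (hP : PosRooted P) :
    PosRooted (P.comp (Polynomial.C κ * Polynomial.X)) := by
  intro z hz
  rw [Polynomial.aeval_comp, map_mul, Polynomial.aeval_C, Polynomial.aeval_X] at hz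
  exact pos_of_mul_pos_right (hP _ hz) (Complex.zero_le_real.mpr hκ.le)

-- Gauss–Lucas: the critical points of `X * P` are in the convex hull of its roots.
theorem derivative_X_mul (hP : PosRooted P) :
    PosRooted (Polynomial.derivative (Polynomial.X * P)) := by
  intro z hz
  have hcoeff : (Polynomial.derivative (Polynomial.X * P)).coeff 0 ≠ 0 := by
    simpa [Polynomial.coeff_derivative] using hP.coeff_zero_ne_zero
  have hP0 : P ≠ 0 := fun h ↦ hP.coeff_zero_ne_zero (by rw [h, Polynomial.coeff_zero])
  set R : ℂ[X] := (Polynomial.X * P).map (algebraMap ℝ ℂ) with hR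
  have hdeg : 0 < R.degree := by
    rw [hR, Polynomial.degree_map, Polynomial.degree_mul, Polynomial.degree_X]
    exact add_pos_of_pos_of_nonneg one_pos (Polynomial.zero_le_degree_iff.mpr hP0)
  have hroots : R.rootSet ℂ ⊆ Set.Ici 0 := by
    intro w hw
    rw [Polynomial.mem_rootSet, hR, Polynomial.aeval_map_algebraMap, map_mul, Polynomial.aeval_X,
      mul_eq_zero] at hw
    exact hw.2.elim (fun h ↦ h.ge) fun h ↦ (hP w h).le
  have hz_mem : z ∈ R.derivative.rootSet ℂ := by
    rw [Polynomial.mem_rootSet, hR, Polynomial.derivative_map, Polynomial.aeval_map_algebraMap,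
      Polynomial.map_ne_zero_iff (algebraMap ℝ ℂ).injective]
    exact ⟨fun h ↦ hcoeff (by rw [h, Polynomial.coeff_zero]), hz⟩
  refine lt_of_le_of_ne (convexHull_min hroots (convex_Ici 0)
    (Polynomial.rootSet_derivative_subset_convexHull_rootSet hdeg hz_mem)) ?_
  rintro rfl
  rw [← Polynomial.coeff_zero_eq_aeval_zero', map_eq_zero] at hz
  exact hcoeff hz

@[elab_as_elim]
theorem induction {motive : ℝ[X] → Prop} (const : ∀ c : ℝ, c ≠ 0 → motive (Polynomial.C c))
    (mul : ∀ a : ℝ, 0 < a → ∀ Q, PosRooted Q → motive Q →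
      motive ((Polynomial.X - Polynomial.C a) * Q)) (hP : PosRooted P) : motive P := by
  induction hn : P.natDegree generalizing P with
  | zero =>
    rw [Polynomial.eq_C_of_natDegree_eq_zero hn]
    exact const _ hP.coeff_zero_ne_zero
  | succ n ih =>
    have hdeg : P.degree ≠ 0 := fun h ↦ by
      rw [Polynomial.natDegree_eq_of_degree_eq_some h] at hn
      exact n.succ_ne_zero hn.symm
    obtain ⟨z, hz⟩ := IsAlgClosed.exists_aeval_eq_zero ℂ P hdeg
    obtain ⟨a, ha, rfl⟩ := RCLike.pos_iff_exists_ofReal.mp (hP z hz)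
    have hroot : P.eval a = 0 :=
      Complex.ofReal_eq_zero.mp ((Polynomial.aeval_ofReal P a).symm.trans hz)
    obtain ⟨Q, rfl⟩ := Polynomial.dvd_iff_isRoot.mpr hroot
    have hQ : PosRooted Q := fun w hw ↦ hP w (by rw [map_mul, hw, mul_zero])
    have hQ0 : Q ≠ 0 := fun h ↦ hQ.coeff_zero_ne_zero (by rw [h, Polynomial.coeff_zero])
    rw [Polynomial.natDegree_mul (Polynomial.X_sub_C_ne_zero a) hQ0, Polynomial.natDegree_X_sub_C]
      at hn
    exact mul a ha Q hQ (ih hQ (by omega))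

end PosRooted

/-- The power series of `-x f'(x) / f(x)`. For a polynomial with positive roots `a` it is
`∑ₐ x / (a - x)`, whence the sign. -/
noncomputable def negLogDeriv (f : ℝ⟦X⟧) : ℝ⟦X⟧ :=
  -(PowerSeries.X * d⁄dX ℝ f) * f⁻¹

section NegLogDeriv

variable {f g : ℝ⟦X⟧}

theorem negLogDeriv_mul_self (hf : PowerSeries.constantCoeff f ≠ 0) :
    negLogDeriv f * f = -(PowerSeries.X * d⁄dX ℝ f) := by
  rw [negLogDeriv, mul_assoc, PowerSeries.inv_mul_cancel f hf, mul_one]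

theorem constantCoeff_negLogDeriv (f : ℝ⟦X⟧) :
    PowerSeries.constantCoeff (negLogDeriv f) = 0 := by
  simp [negLogDeriv]

theorem negLogDeriv_C (c : ℝ) : negLogDeriv (PowerSeries.C c) = 0 := by
  rw [negLogDeriv, PowerSeries.derivative_C, mul_zero, neg_zero, zero_mul]

theorem eq_negLogDeriv {s : ℝ⟦X⟧} (hf : PowerSeries.constantCoeff f ≠ 0)
    (hs : s * f = -(PowerSeries.X * d⁄dX ℝ f)) : s = negLogDeriv f :=
  (PowerSeries.eq_mul_inv_iff_mul_eq hf).mpr hs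

theorem negLogDeriv_mul (hf : PowerSeries.constantCoeff f ≠ 0)
    (hg : PowerSeries.constantCoeff g ≠ 0) :
    negLogDeriv (f * g) = negLogDeriv f + negLogDeriv g := by
  refine (eq_negLogDeriv (by rw [map_mul]; exact mul_ne_zero hf hg) ?_).symm
  rw [Derivation.leibniz, smul_eq_mul, smul_eq_mul]
  linear_combination g * negLogDeriv_mul_self hf + f * negLogDeriv_mul_self hg

theorem negLogDeriv_X_sub_C {a : ℝ} (ha : a ≠ 0) :
    negLogDeriv (PowerSeries.X - PowerSeries.C a) =
      PowerSeries.X * PowerSeries.invUnitsSub (Units.mk0 a ha) := by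
  refine (eq_negLogDeriv (by simpa using ha) ?_).symm
  have hinv := PowerSeries.invUnitsSub_mul_sub (Units.mk0 a ha)
  rw [Units.val_mk0] at hinv
  rw [map_sub, PowerSeries.derivative_X, PowerSeries.derivative_C]
  linear_combination -PowerSeries.X * hinv

theorem coeff_negLogDeriv_succ (f : ℝ⟦X⟧) (n : ℕ) :
    PowerSeries.coeff (n + 1) (negLogDeriv f) =
      (-(PowerSeries.coeff n (d⁄dX ℝ f)) - ∑ i ∈ Finset.range (n + 1),
        PowerSeries.coeff i (negLogDeriv f) * PowerSeries.coeff (n + 1 - i) f) /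
          PowerSeries.constantCoeff f := by
  by_cases hf : PowerSeries.constantCoeff f = 0
  · rw [hf, div_zero, negLogDeriv, PowerSeries.inv_eq_zero.mpr hf, mul_zero, map_zero]
  have h := congrArg (PowerSeries.coeff (n + 1)) (negLogDeriv_mul_self hf)
  rw [PowerSeries.coeff_mul, Finset.Nat.sum_antidiagonal_eq_sum_range_succ_mk,
    Finset.sum_range_succ, Nat.sub_self, map_neg, PowerSeries.coeff_succ_X_mul] at h
  rw [eq_div_iff hf, ← h, PowerSeries.coeff_zero_eq_constantCoeff_apply]
  ring

theorem seriesSum_negLogDeriv_mul {𝕜 : Type*} [RCLike 𝕜] (hf : IsEntire f)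
    (hf0 : PowerSeries.constantCoeff f ≠ 0) {z : 𝕜}
    (hs : Summable fun n ↦ PowerSeries.coeff n (negLogDeriv f) * ‖z‖ ^ n) :
    seriesSum (negLogDeriv f) z * seriesSum f z = -(z * seriesSum (d⁄dX ℝ f) z) := by
  have hneg : seriesSum (-(PowerSeries.X * d⁄dX ℝ f)) z =
      -seriesSum (PowerSeries.X * d⁄dX ℝ f) z := by
    simp only [seriesSum, map_neg, neg_mul, tsum_neg]
  rw [← seriesSum_mul hs (hf ‖z‖), negLogDeriv_mul_self hf0, hneg, seriesSum_X_mul hf.derivative]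

theorem PosRooted.negLogDeriv_X_sub_C_mul {Q : ℝ[X]} (hQ : PosRooted Q) {a : ℝ} (ha : 0 < a) :
    negLogDeriv (((Polynomial.X - Polynomial.C a) * Q : ℝ[X]) : ℝ⟦X⟧) =
      PowerSeries.X * PowerSeries.invUnitsSub (Units.mk0 a ha.ne') + negLogDeriv (Q : ℝ⟦X⟧) := by
  rw [Polynomial.coe_mul, Polynomial.coe_sub, Polynomial.coe_X, Polynomial.coe_C,
    negLogDeriv_mul (by simpa using ha.ne')
      (by simpa [Polynomial.constantCoeff_coe] using hQ.coeff_zero_ne_zero),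
    negLogDeriv_X_sub_C ha.ne']

theorem PosRooted.coeff_negLogDeriv_nonneg {P : ℝ[X]} (hP : PosRooted P) (n : ℕ) :
    0 ≤ PowerSeries.coeff n (negLogDeriv (P : ℝ⟦X⟧)) := by
  refine PosRooted.induction (fun c _ ↦ ?_) (fun a ha Q hQ ih ↦ ?_) hP
  · rw [Polynomial.coe_C, negLogDeriv_C, map_zero]
  · rw [hQ.negLogDeriv_X_sub_C_mul ha, map_add]
    refine add_nonneg ?_ ih
    cases n with
    | zero => rw [PowerSeries.coeff_zero_X_mul]
    | succ n =>
      rw [PowerSeries.coeff_succ_X_mul, PowerSeries.coeff_invUnitsSub, one_divp,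
        Units.val_inv_eq_inv_val, Units.val_pow_eq_pow_val, Units.val_mk0]
      positivity

theorem PosRooted.summable_negLogDeriv {P : ℝ[X]} (hP : PosRooted P) {r : ℝ} (hr : 0 ≤ r)
    (hPr : ∀ x ∈ Set.Icc 0 r, P.eval x ≠ 0) :
    Summable fun n ↦ PowerSeries.coeff n (negLogDeriv (P : ℝ⟦X⟧)) * r ^ n := by
  revert hPr
  refine PosRooted.induction (fun c _ _ ↦ ?_) (fun a ha Q hQ ih hPr ↦ ?_) hP
  · simpa only [Polynomial.coe_C, negLogDeriv_C, map_zero, zero_mul] using summable_zero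
  · simp only [Polynomial.eval_mul, mul_ne_zero_iff] at hPr
    have hra : r < a := by
      by_contra! har
      simpa using (hPr a ⟨ha.le, har⟩).1
    have hgeom : Summable fun n ↦ PowerSeries.coeff n
        (PowerSeries.X * PowerSeries.invUnitsSub (Units.mk0 a ha.ne')) * r ^ n := by
      rw [← summable_nat_add_iff 1]
      refine ((summable_nat_add_iff 1).mpr (summable_geometric_of_lt_one (by positivity)
        ((div_lt_one ha).mpr hra))).congr fun n ↦ ?_
      rw [PowerSeries.coeff_succ_X_mul, PowerSeries.coeff_invUnitsSub, one_divp,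
        Units.val_inv_eq_inv_val, Units.val_pow_eq_pow_val, Units.val_mk0, div_pow,
        div_eq_inv_mul]
    simpa only [hQ.negLogDeriv_X_sub_C_mul ha, map_add, add_mul] using
      hgeom.add (ih fun x hx ↦ (hPr x hx).2)

end NegLogDeriv

/-- Coefficientwise convergence of power series, dominated by the coefficients of the limit. If the
limit is entire, this implies locally uniform convergence of the sums. -/
structure DominatedTendsto {ι : Type*} (F : ι → ℝ⟦X⟧) (l : Filter ι) (f : ℝ⟦X⟧) : Prop where
  tendsto_coeff : ∀ n, Tendsto (fun i ↦ PowerSeries.coeff n (F i)) l (𝓝 (PowerSeries.coeff n f))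
  norm_coeff_le : ∀ i n, ‖PowerSeries.coeff n (F i)‖ ≤ ‖PowerSeries.coeff n f‖

namespace DominatedTendsto

variable {ι : Type*} {F : ι → ℝ⟦X⟧} {l : Filter ι} {f : ℝ⟦X⟧}

theorem X_mul (h : DominatedTendsto F l f) :
    DominatedTendsto (fun i ↦ PowerSeries.X * F i) l (PowerSeries.X * f) where
  tendsto_coeff
    | 0 => by simpa only [PowerSeries.coeff_zero_X_mul] using tendsto_const_nhds
    | n + 1 => by simpa only [PowerSeries.coeff_succ_X_mul] using h.tendsto_coeff n
  norm_coeff_le i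
    | 0 => by simp only [PowerSeries.coeff_zero_X_mul, le_refl]
    | n + 1 => by simpa only [PowerSeries.coeff_succ_X_mul] using h.norm_coeff_le i n

theorem C_mul (h : DominatedTendsto F l f) (c : ℝ) :
    DominatedTendsto (fun i ↦ PowerSeries.C c * F i) l (PowerSeries.C c * f) where
  tendsto_coeff n := by
    simpa only [PowerSeries.coeff_C_mul] using (h.tendsto_coeff n).const_mul c
  norm_coeff_le i n := by
    simpa only [PowerSeries.coeff_C_mul, norm_mul] using
      mul_le_mul_of_nonneg_left (h.norm_coeff_le i n) (norm_nonneg c)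

theorem rescale (h : DominatedTendsto F l f) (κ : ℝ) :
    DominatedTendsto (fun i ↦ PowerSeries.rescale κ (F i)) l (PowerSeries.rescale κ f) where
  tendsto_coeff n := by
    simpa only [PowerSeries.coeff_rescale] using (h.tendsto_coeff n).const_mul (κ ^ n)
  norm_coeff_le i n := by
    simpa only [PowerSeries.coeff_rescale, norm_mul] using
      mul_le_mul_of_nonneg_left (h.norm_coeff_le i n) (norm_nonneg (κ ^ n))

theorem derivative (h : DominatedTendsto F l f) :
    DominatedTendsto (fun i ↦ d⁄dX ℝ (F i)) l (d⁄dX ℝ f) where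
  tendsto_coeff n := by
    simpa only [PowerSeries.coeff_derivative] using (h.tendsto_coeff (n + 1)).mul_const (n + 1 : ℝ)
  norm_coeff_le i n := by
    simpa only [PowerSeries.coeff_derivative, norm_mul] using
      mul_le_mul_of_nonneg_right (h.norm_coeff_le i (n + 1)) (norm_nonneg (n + 1 : ℝ))

theorem tendsto_coeff_negLogDeriv (h : DominatedTendsto F l f)
    (hf : PowerSeries.constantCoeff f ≠ 0) (n : ℕ) :
    Tendsto (fun i ↦ PowerSeries.coeff n (negLogDeriv (F i))) l
      (𝓝 (PowerSeries.coeff n (negLogDeriv f))) := by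
  induction n using Nat.strong_induction_on with
  | _ n ih =>
    cases n with
    | zero =>
      simpa only [PowerSeries.coeff_zero_eq_constantCoeff_apply, constantCoeff_negLogDeriv] using
        tendsto_const_nhds
    | succ n =>
      simp only [coeff_negLogDeriv_succ]
      refine Tendsto.div ((h.derivative.tendsto_coeff n).neg.sub (tendsto_finsetSum _ fun i hi ↦
        (ih i (Finset.mem_range.mp hi)).mul (h.tendsto_coeff _))) ?_ hf
      simpa only [PowerSeries.coeff_zero_eq_constantCoeff_apply] using h.tendsto_coeff 0

theorem tendsto_seriesSum_prod (h : DominatedTendsto F l f) (hf : IsEntire f) (x : ℝ) :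
    Tendsto (fun p : ι × ℝ ↦ seriesSum (F p.1) p.2) (l ×ˢ 𝓝 x) (𝓝 (seriesSum f x)) := by
  simp only [seriesSum_real]
  refine tendsto_tsum_of_dominated_convergence (hf (|x| + 1)).norm (fun n ↦ ?_) ?_
  · exact ((h.tendsto_coeff n).comp tendsto_fst).mul (tendsto_snd.pow n)
  · have hx : ∀ᶠ p : ι × ℝ in l ×ˢ 𝓝 x, |p.2| < |x| + 1 :=
      tendsto_snd.abs.eventually_lt_const (lt_add_one _)
    filter_upwards [hx] with p hp n
    rw [norm_mul, norm_mul, norm_pow, norm_pow, Real.norm_of_nonneg (r := |x| + 1) (by positivity)]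
    have hle := h.norm_coeff_le p.1 n
    gcongr
    exact hp.le

theorem tendsto_seriesSum (h : DominatedTendsto F l f) (hf : IsEntire f) (x : ℝ) :
    Tendsto (fun i ↦ seriesSum (F i) x) l (𝓝 (seriesSum f x)) :=
  (h.tendsto_seriesSum_prod hf x).comp (tendsto_id.prodMk tendsto_const_nhds)

theorem eventually_forall_pos (h : DominatedTendsto F l f) (hf : IsEntire f) {K : Set ℝ}
    (hK : IsCompact K) (hpos : ∀ x ∈ K, 0 < seriesSum f x) :
    ∀ᶠ i in l, ∀ x ∈ K, 0 < seriesSum (F i) x := by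
  have hmem : {p : ι × ℝ | 0 < seriesSum (F p.1) p.2} ∈ l ×ˢ 𝓝ˢ K :=
    hK.mem_prod_nhdsSet_of_forall fun x hx ↦
      (h.tendsto_seriesSum_prod hf x).eventually_const_lt (hpos x hx)
  exact (Eventually.curry hmem).mono fun _ hi ↦ hi.self_of_nhdsSet

end DominatedTendsto

/-- `f` is a dominated limit of polynomials all of whose roots are real and positive. If `f` is
entire, this places it in the Laguerre–Pólya class. -/
def IsPosRootedLimit (f : ℝ⟦X⟧) : Prop :=
  ∃ P : ℕ → ℝ[X], (∀ K, PosRooted (P K)) ∧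
    DominatedTendsto (fun K ↦ (P K : ℝ⟦X⟧)) atTop f

namespace IsPosRootedLimit

variable {f : ℝ⟦X⟧}

theorem C_mul {c : ℝ} (hc : c ≠ 0) (hf : IsPosRootedLimit f) :
    IsPosRootedLimit (PowerSeries.C c * f) := by
  obtain ⟨P, hP, hPf⟩ := hf
  refine ⟨fun K ↦ Polynomial.C c * P K, fun K ↦ (hP K).C_mul hc, ?_⟩
  simpa only [Polynomial.coe_mul, Polynomial.coe_C] using hPf.C_mul c

theorem rescale {κ : ℝ} (hκ : 0 < κ) (hf : IsPosRootedLimit f) :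
    IsPosRootedLimit (PowerSeries.rescale κ f) := by
  obtain ⟨P, hP, hPf⟩ := hf
  refine ⟨fun K ↦ (P K).comp (Polynomial.C κ * Polynomial.X), fun K ↦ (hP K).comp_C_mul_X hκ, ?_⟩
  convert hPf.rescale κ using 2 with K
  ext n
  rw [Polynomial.coeff_coe, Polynomial.comp_C_mul_X_coeff, PowerSeries.coeff_rescale,
    Polynomial.coeff_coe, mul_comm]

theorem derivative_X_mul (hf : IsPosRootedLimit f) :
    IsPosRootedLimit (d⁄dX ℝ (PowerSeries.X * f)) := by
  obtain ⟨P, hP, hPf⟩ := hf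
  refine ⟨fun K ↦ Polynomial.derivative (Polynomial.X * P K), fun K ↦ (hP K).derivative_X_mul, ?_⟩
  simpa only [← PowerSeries.derivative_coe, Polynomial.coe_mul, Polynomial.coe_X] using
    hPf.X_mul.derivative

theorem coeff_negLogDeriv_nonneg (hf : IsPosRootedLimit f)
    (hf0 : PowerSeries.constantCoeff f ≠ 0) (n : ℕ) :
    0 ≤ PowerSeries.coeff n (negLogDeriv f) := by
  obtain ⟨P, hP, hPf⟩ := hf
  exact ge_of_tendsto' (hPf.tendsto_coeff_negLogDeriv hf0 n) fun K ↦
    (hP K).coeff_negLogDeriv_nonneg n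

theorem summable_negLogDeriv (hf : IsPosRootedLimit f) (hfe : IsEntire f) {r : ℝ} (hr : 0 ≤ r)
    (hpos : ∀ x ∈ Set.Icc 0 r, 0 < seriesSum f x) :
    Summable fun n ↦ PowerSeries.coeff n (negLogDeriv f) * r ^ n := by
  have hf0 : PowerSeries.constantCoeff f ≠ 0 := by
    have h := (hpos 0 ⟨le_rfl, hr⟩).ne'
    rwa [seriesSum_zero] at h
  have hnonneg := hf.coeff_negLogDeriv_nonneg hf0
  obtain ⟨P, hP, hPf⟩ := hf
  refine summable_of_sum_range_le (c := -(r * seriesSum (d⁄dX ℝ f) r) / seriesSum f r)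
    (fun n ↦ mul_nonneg (hnonneg n) (pow_nonneg hr n)) fun N ↦ ?_
  refine le_of_tendsto_of_tendsto
    (tendsto_finsetSum _ fun n _ ↦ (hPf.tendsto_coeff_negLogDeriv hf0 n).mul_const (r ^ n))
    (((hPf.derivative.tendsto_seriesSum hfe.derivative r).const_mul r).neg.div
      (hPf.tendsto_seriesSum hfe r) (hpos r ⟨hr, le_rfl⟩).ne') ?_
  filter_upwards [hPf.eventually_forall_pos hfe isCompact_Icc hpos] with K hK
  have hsum : Summable fun n ↦ PowerSeries.coeff n (negLogDeriv (P K : ℝ⟦X⟧)) * r ^ n :=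
    (hP K).summable_negLogDeriv hr fun x hx ↦ by
      simpa only [seriesSum_coe, Polynomial.coe_aeval_eq_eval] using (hK x hx).ne'
  have hPK0 : PowerSeries.constantCoeff (P K : ℝ⟦X⟧) ≠ 0 := by
    simpa only [Polynomial.constantCoeff_coe] using (hP K).coeff_zero_ne_zero
  rw [Pi.div_apply, ← seriesSum_negLogDeriv_mul (isEntire_coe _) hPK0
    (by rwa [Real.norm_of_nonneg hr]), mul_div_cancel_right₀ _ (hK r ⟨hr, le_rfl⟩).ne']
  exact hsum.sum_le_tsum _ fun n _ ↦
    mul_nonneg ((hP K).coeff_negLogDeriv_nonneg n) (pow_nonneg hr n)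

end IsPosRootedLimit

section BelowFirstZero

variable {g : ℝ⟦X⟧} {ς : ℝ}

theorem seriesSum_pos_of_lt_firstZero (hge : IsEntire g) (hg0 : 0 < PowerSeries.constantCoeff g)
    (hς : IsLeast {x : ℝ | 0 < x ∧ seriesSum g x = 0} ς) {x : ℝ} (hx : x ∈ Set.Ico 0 ς) :
    0 < seriesSum g x := by
  by_contra! hle
  have hcont : Continuous (seriesSum g : ℝ → ℝ) :=
    continuous_iff_continuousAt.mpr fun y ↦ (hasDerivAt_seriesSum hge y).continuousAt
  have hpos : 0 < seriesSum g (0 : ℝ) := by rwa [seriesSum_zero]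
  obtain ⟨c, hc, hc0⟩ := intermediate_value_Icc' hx.1 hcont.continuousOn ⟨hle, hpos.le⟩
  have hc_pos : 0 < c := hc.1.lt_of_ne' (by rintro rfl; exact hpos.ne' hc0)
  exact (hς.2 ⟨hc_pos, hc0⟩).not_gt (hc.2.trans_lt hx.2)

theorem IsPosRootedLimit.summable_of_lt_firstZero (hg : IsPosRootedLimit g) (hge : IsEntire g)
    (hg0 : 0 < PowerSeries.constantCoeff g)
    (hς : IsLeast {x : ℝ | 0 < x ∧ seriesSum g x = 0} ς) {x : ℝ} (hx : x ∈ Set.Ico 0 ς) :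
    Summable fun n ↦ PowerSeries.coeff n (negLogDeriv g) * x ^ n :=
  hg.summable_negLogDeriv hge hx.1 fun _ hy ↦
    seriesSum_pos_of_lt_firstZero hge hg0 hς ⟨hy.1, hy.2.trans_lt hx.2⟩

theorem IsPosRootedLimit.mul_derivative_div {𝕜 : Type*} [RCLike 𝕜] (hg : IsPosRootedLimit g)
    (hge : IsEntire g) (hg0 : 0 < PowerSeries.constantCoeff g)
    (hς : IsLeast {x : ℝ | 0 < x ∧ seriesSum g x = 0} ς) {z : 𝕜} (hz : ‖z‖ < ς)
    (hgz : seriesSum g z ≠ 0) :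
    z * seriesSum (d⁄dX ℝ g) z / seriesSum g z = -seriesSum (negLogDeriv g) z := by
  rw [div_eq_iff hgz, neg_mul, seriesSum_negLogDeriv_mul hge hg0.ne'
    (hg.summable_of_lt_firstZero hge hg0 hς ⟨norm_nonneg z, hz⟩), neg_neg]

theorem IsPosRootedLimit.one_sub_le_re (hg : IsPosRootedLimit g)
    (hge : IsEntire g) (hg0 : 0 < PowerSeries.constantCoeff g)
    (hς : IsLeast {x : ℝ | 0 < x ∧ seriesSum g x = 0} ς) {z : ℂ} (hz : ‖z‖ < ς) :
    1 - seriesSum (negLogDeriv g) ‖z‖ ≤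
      (1 + z * seriesSum (d⁄dX ℝ g) z / seriesSum g z).re := by
  have hnonneg := hg.coeff_negLogDeriv_nonneg hg0.ne'
  have hle : ‖seriesSum (negLogDeriv g) z‖ ≤ seriesSum (negLogDeriv g) ‖z‖ :=
    norm_seriesSum_le hnonneg (hg.summable_of_lt_firstZero hge hg0 hς ⟨norm_nonneg z, hz⟩)
  rw [Complex.add_re, Complex.one_re]
  by_cases hgz : seriesSum g z = 0
  · rw [hgz, div_zero, Complex.zero_re]
    linarith [(norm_nonneg _).trans hle]
  · rw [hg.mul_derivative_div hge hg0 hς hz hgz, Complex.neg_re]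
    linarith [(Complex.re_le_norm _).trans hle]

theorem IsPosRootedLimit.continuousOn_negLogDeriv (hg : IsPosRootedLimit g)
    (hge : IsEntire g) (hg0 : 0 < PowerSeries.constantCoeff g)
    (hς : IsLeast {x : ℝ | 0 < x ∧ seriesSum g x = 0} ς) :
    ContinuousOn (seriesSum (negLogDeriv g) : ℝ → ℝ) (Set.Ico 0 ς) := by
  have hne (x : ℝ) (hx : x ∈ Set.Ico 0 ς) : seriesSum g x ≠ 0 :=
    (seriesSum_pos_of_lt_firstZero hge hg0 hς hx).ne'
  have hcont {f : ℝ⟦X⟧} (hf : IsEntire f) : ContinuousOn (seriesSum f : ℝ → ℝ) (Set.Ico 0 ς) :=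
    fun x _ ↦ (hasDerivAt_seriesSum hf x).continuousAt.continuousWithinAt
  refine (((continuousOn_id.mul (hcont hge.derivative)).div (hcont hge) hne).neg).congr
    fun x hx ↦ (neg_eq_iff_eq_neg.mpr ?_).symm
  exact hg.mul_derivative_div (z := x) hge hg0 hς
    (by rw [Real.norm_of_nonneg hx.1]; exact hx.2) (hne x hx)

-- If `x f'(x) / f(x) > -k` up to `ς`, then `x ^ k * f x` increases to `0`.
theorem IsPosRootedLimit.exists_le_seriesSum_negLogDeriv (hg : IsPosRootedLimit g)
    (hge : IsEntire g) (hg0 : 0 < PowerSeries.constantCoeff g)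
    (hς : IsLeast {x : ℝ | 0 < x ∧ seriesSum g x = 0} ς) (C : ℝ) :
    ∃ r ∈ Set.Ioo 0 ς, C ≤ seriesSum (negLogDeriv g) r := by
  by_contra! hlt
  obtain ⟨k, hk⟩ := exists_nat_ge C
  have hderiv (x : ℝ) : HasDerivAt (fun x ↦ x ^ (k + 1) * seriesSum g x)
      (((k + 1 : ℕ) : ℝ) * x ^ k * seriesSum g x + x ^ (k + 1) * seriesSum (d⁄dX ℝ g) x) x :=
    (hasDerivAt_pow (k + 1) x).mul (hasDerivAt_seriesSum hge x)
  have hmono : MonotoneOn (fun x ↦ x ^ (k + 1) * seriesSum g x) (Set.Icc 0 ς) := by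
    refine monotoneOn_of_deriv_nonneg (convex_Icc 0 ς)
      (fun x _ ↦ (hderiv x).continuousAt.continuousWithinAt)
      (fun x _ ↦ (hderiv x).differentiableAt.differentiableWithinAt) fun x hx ↦ ?_
    rw [interior_Icc] at hx
    have hgx := seriesSum_pos_of_lt_firstZero hge hg0 hς ⟨hx.1.le, hx.2⟩
    have hS := seriesSum_negLogDeriv_mul hge hg0.ne' (z := x)
      (hg.summable_of_lt_firstZero hge hg0 hς
        ⟨norm_nonneg x, by rw [Real.norm_of_nonneg hx.1.le]; exact hx.2⟩)
    have hfactor : deriv (fun x ↦ x ^ (k + 1) * seriesSum g x) x =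
        x ^ k * (seriesSum g x * (k + 1 - seriesSum (negLogDeriv g) x)) := by
      rw [(hderiv x).deriv]
      push_cast
      linear_combination x ^ k * hS
    have hSx : 0 ≤ k + 1 - seriesSum (negLogDeriv g) x := by linarith [hlt x hx]
    rw [hfactor]
    exact mul_nonneg (pow_nonneg hx.1.le k) (mul_nonneg hgx.le hSx)
  have hς0 : 0 < ς := hς.1.1
  have hhalf := seriesSum_pos_of_lt_firstZero hge hg0 hς (x := ς / 2) ⟨by linarith, by linarith⟩
  have hle := hmono (a := ς / 2) (b := ς) ⟨by linarith, by linarith⟩ ⟨hς0.le, le_rfl⟩ (by linarith)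
  simp only [hς.1.2, mul_zero] at hle
  exact hle.not_gt (by positivity)

theorem IsPosRootedLimit.strictMonoOn_negLogDeriv (hg : IsPosRootedLimit g)
    (hge : IsEntire g) (hg0 : 0 < PowerSeries.constantCoeff g)
    (hς : IsLeast {x : ℝ | 0 < x ∧ seriesSum g x = 0} ς) :
    StrictMonoOn (seriesSum (negLogDeriv g) : ℝ → ℝ) (Set.Ico 0 ς) := by
  have hnonneg := hg.coeff_negLogDeriv_nonneg hg0.ne'
  obtain ⟨k, hk⟩ : ∃ k, 0 < PowerSeries.coeff k (negLogDeriv g) := by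
    by_contra! hle
    obtain ⟨r, -, hr⟩ := hg.exists_le_seriesSum_negLogDeriv hge hg0 hς 1
    have hzero (n : ℕ) : PowerSeries.coeff n (negLogDeriv g) = 0 := (hle n).antisymm (hnonneg n)
    simp only [seriesSum_real, hzero, zero_mul, tsum_zero] at hr
    exact hr.not_gt one_pos
  have hk0 : k ≠ 0 := by
    rintro rfl
    rw [PowerSeries.coeff_zero_eq_constantCoeff_apply, constantCoeff_negLogDeriv] at hk
    exact hk.false
  intro x hx y hy hxy
  simp only [seriesSum_real]
  exact Summable.tsum_lt_tsum (i := k)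
    (fun n ↦ mul_le_mul_of_nonneg_left (pow_le_pow_left₀ hx.1 hxy.le n) (hnonneg n))
    (mul_lt_mul_of_pos_left (pow_lt_pow_left₀ hxy hx.1 hk0) hk)
    (hg.summable_of_lt_firstZero hge hg0 hς hx) (hg.summable_of_lt_firstZero hge hg0 hς hy)

theorem IsPosRootedLimit.exists_seriesSum_negLogDeriv_eq (hg : IsPosRootedLimit g)
    (hge : IsEntire g) (hg0 : 0 < PowerSeries.constantCoeff g)
    (hς : IsLeast {x : ℝ | 0 < x ∧ seriesSum g x = 0} ς) {C : ℝ} (hC : 0 < C) :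
    ∃ r ∈ Set.Ioo 0 ς, seriesSum (negLogDeriv g) r = C := by
  obtain ⟨r, hr, hCr⟩ := hg.exists_le_seriesSum_negLogDeriv hge hg0 hς C
  have hS0 : seriesSum (negLogDeriv g) (0 : ℝ) = 0 := by
    rw [seriesSum_zero, constantCoeff_negLogDeriv, RCLike.ofReal_zero]
  have hcont := (hg.continuousOn_negLogDeriv hge hg0 hς).mono (Set.Icc_subset_Ico_right hr.2)
  obtain ⟨c, hc, hcC⟩ := intermediate_value_Icc hr.1.le hcont ⟨hS0.le.trans hC.le, hCr⟩
  have hc0 : c ≠ 0 := by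
    rintro rfl
    exact hC.ne (hS0.symm.trans hcC)
  exact ⟨c, ⟨hc.1.lt_of_ne' hc0, hc.2.trans_lt hr.2⟩, hcC⟩

theorem IsPosRootedLimit.one_add_mul_derivative_div (hg : IsPosRootedLimit g)
    (hge : IsEntire g) (hg0 : 0 < PowerSeries.constantCoeff g)
    (hς : IsLeast {x : ℝ | 0 < x ∧ seriesSum g x = 0} ς) {r : ℝ} (hr : r ∈ Set.Ico 0 ς) :
    1 + r * seriesSum (d⁄dX ℝ g) r / seriesSum g r = 1 - seriesSum (negLogDeriv g) r := by
  rw [hg.mul_derivative_div hge hg0 hς (by rw [Real.norm_of_nonneg hr.1]; exact hr.2)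
    (seriesSum_pos_of_lt_firstZero hge hg0 hς hr).ne', sub_eq_add_neg]

theorem IsPosRootedLimit.setOf_forall_lt_re_eq_Ioc (hg : IsPosRootedLimit g)
    (hge : IsEntire g) (hg0 : 0 < PowerSeries.constantCoeff g)
    (hς : IsLeast {x : ℝ | 0 < x ∧ seriesSum g x = 0} ς) {s : ℝ} (hs : s ∈ Set.Ico 0 ς) :
    {r : ℝ | 0 < r ∧ ∀ z : ℂ, ‖z‖ < r → 1 - seriesSum (negLogDeriv g) s <
      (1 + z * seriesSum (d⁄dX ℝ g) z / seriesSum g z).re} = Set.Ioc 0 s := by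
  ext r
  refine and_congr_right fun _ ↦ ⟨fun h ↦ ?_, fun h z hz ↦ ?_⟩
  · by_contra! hsr
    have hlt := h s (by rwa [Complex.norm_of_nonneg hs.1])
    simp only [seriesSum_ofReal] at hlt
    norm_cast at hlt
    exact hlt.ne' (hg.one_add_mul_derivative_div hge hg0 hς hs)
  · have hzs := hz.trans_le h
    have hS := hg.strictMonoOn_negLogDeriv hge hg0 hς ⟨norm_nonneg z, hzs.trans hs.2⟩ hs hzs
    linarith [hg.one_sub_le_re hge hg0 hς (hzs.trans hs.2)]

end BelowFirstZero

theorem existsUnique_radiusConvex {F : ℝ⟦X⟧} (hF : IsEntire F)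
    (hF1 : 0 < PowerSeries.coeff 1 F) (hlim : IsPosRootedLimit (d⁄dX ℝ F)) {α ς : ℝ} (hα : α < 1)
    (hς : IsLeast {x : ℝ | 0 < x ∧ deriv (seriesSum F) x = 0} ς) :
    ∃ r₃ : ℝ, (r₃ ∈ Set.Ioo 0 ς ∧
        1 + r₃ * deriv (deriv (seriesSum F)) r₃ / deriv (seriesSum F) r₃ = α) ∧
      (∀ r : ℝ, r ∈ Set.Ioo 0 ς →
        1 + r * deriv (deriv (seriesSum F)) r / deriv (seriesSum F) r = α → r = r₃) ∧
      radiusConvex α (seriesSum F) = r₃ := by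
  simp only [radiusConvex, deriv_seriesSum hF, deriv_seriesSum hF.derivative] at hς ⊢
  have hG := hF.derivative
  have hG0 : 0 < PowerSeries.constantCoeff (d⁄dX ℝ F) := by
    simpa [← PowerSeries.coeff_zero_eq_constantCoeff_apply, PowerSeries.coeff_derivative]
  generalize d⁄dX ℝ F = g at *
  obtain ⟨r₃, hr₃, hr₃α⟩ :=
    hlim.exists_seriesSum_negLogDeriv_eq hG hG0 hς (sub_pos.mpr hα)
  obtain rfl : 1 - seriesSum (negLogDeriv g) r₃ = α := by rw [hr₃α, sub_sub_cancel]
  have hval {r : ℝ} (hr : r ∈ Set.Ioo 0 ς) :=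
    hlim.one_add_mul_derivative_div hG hG0 hς (Set.Ioo_subset_Ico_self hr)
  refine ⟨r₃, ⟨hr₃, hval hr₃⟩, fun r hr hrα ↦ ?_, ?_⟩
  · exact (hlim.strictMonoOn_negLogDeriv hG hG0 hς).injOn (Set.Ioo_subset_Ico_self hr)
      (Set.Ioo_subset_Ico_self hr₃) (sub_right_injective ((hval hr).symm.trans hrα))
  · rw [hlim.setOf_forall_lt_re_eq_Ioc hG hG0 hς (Set.Ioo_subset_Ico_self hr₃), csSup_Ioc hr₃.1]

section SignChanges

variable {P : ℝ[X]} {N : ℕ} {x : ℕ → ℝ}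

theorem exists_strictMono_roots_of_alternating_signs (hx : StrictMono x)
    (hsign : ∀ k ≤ N, 0 < (-1) ^ k * P.eval (x k)) :
    ∃ y : Fin N → ℝ, StrictMono y ∧ ∀ i, x 0 < y i ∧ P.eval (y i) = 0 := by
  have hroot (i : Fin N) : ∃ y ∈ Set.Ioo (x i) (x (i + 1)), P.eval y = 0 := by
    have hcont : ContinuousOn (fun y ↦ (-1) ^ (i : ℕ) * P.eval y) (Set.Icc (x i) (x (i + 1))) := by
      fun_prop
    have hneg : (-1) ^ (i : ℕ) * P.eval (x (i + 1)) < 0 := by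
      have h := hsign (i + 1) i.isLt
      rw [pow_succ] at h
      linarith
    obtain ⟨y, hy, hy0⟩ := intermediate_value_Ioo' (hx (Nat.lt_succ_self _)).le hcont
      ⟨hneg, hsign i i.isLt.le⟩
    exact ⟨y, hy, (mul_eq_zero.mp hy0).resolve_left (by simp)⟩
  choose y hy hy0 using hroot
  refine ⟨y, fun i j hij ↦ (hy i).2.trans_le ((hx.monotone ?_).trans (hy j).1.le), fun i ↦
    ⟨(hx.monotone (Nat.zero_le i)).trans_lt (hy i).1, hy0 i⟩⟩
  exact Nat.succ_le_of_lt hij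

theorem PosRooted.of_alternating_signs (hdeg : P.natDegree ≤ N) (hx : StrictMono x) (hx0 : 0 ≤ x 0)
    (hsign : ∀ k ≤ N, 0 < (-1) ^ k * P.eval (x k)) : PosRooted P := by
  obtain ⟨y, hy, hy0⟩ := exists_strictMono_roots_of_alternating_signs hx hsign
  have hP : P ≠ 0 := by
    rintro rfl
    simpa using hsign 0 N.zero_le
  set Y : Finset ℂ := Finset.univ.image fun i ↦ (y i : ℂ)
  have hYcard : Y.card = N := by
    rw [Finset.card_image_of_injective Finset.univ (f := fun i ↦ (y i : ℂ))
      (Complex.ofReal_injective.comp hy.injective), Finset.card_univ, Fintype.card_fin]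
  have hYroot : ∀ w ∈ Y, Polynomial.aeval w P = 0 := by
    simp only [Y, Finset.mem_image, Finset.mem_univ, true_and]
    rintro _ ⟨i, rfl⟩
    rw [← Complex.coe_algebraMap, Polynomial.aeval_algebraMap_apply,
      Polynomial.coe_aeval_eq_eval, (hy0 i).2, map_zero]
  intro z hz
  have hzY : z ∈ Y := by
    by_contra hzY
    have hsub : (insert z Y).val ⊆ (P.map (algebraMap ℝ ℂ)).roots := fun w hw ↦ by
      rw [Polynomial.mem_roots ((Polynomial.map_ne_zero_iff (algebraMap ℝ ℂ).injective).mpr hP),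
        Polynomial.IsRoot.def, Polynomial.eval_map_algebraMap]
      exact (Finset.mem_insert.mp hw).elim (fun h ↦ by rwa [h]) (hYroot w)
    have hcard := Polynomial.card_le_degree_of_subset_roots hsub
    rw [Finset.card_insert_of_notMem hzY, hYcard, Polynomial.natDegree_map] at hcard
    lia
  obtain ⟨i, -, rfl⟩ := Finset.mem_image.mp hzY
  exact Complex.zero_lt_real.mpr (hx0.trans_lt (hy0 i).1)

end SignChanges

section Hutchinson

theorem sum_alternating_mem_Icc {t : ℕ → ℝ} (ht : ∀ n, 0 ≤ t n) (hanti : Antitone t) (m : ℕ) :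
    ∑ n ∈ Finset.range (m + 1), (-1) ^ n * t n ∈ Set.Icc (t 0 - t 1) (t 0) := by
  induction m generalizing t with
  | zero => simpa using ht 1
  | succ m ih =>
    have hih := ih (t := fun n ↦ t (n + 1)) (fun n ↦ ht _) fun _ _ h ↦ hanti (by gcongr)
    have hpeel : ∑ n ∈ Finset.range (m + 1 + 1), (-1) ^ n * t n =
        t 0 - ∑ n ∈ Finset.range (m + 1), (-1) ^ n * t (n + 1) := by
      rw [Finset.sum_range_succ', sub_eq_neg_add, ← Finset.sum_neg_distrib]
      simp [pow_succ]
    rw [hpeel]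
    constructor <;> linarith [hih.1, hih.2, hanti (Nat.le_succ 1)]

theorem sum_alternating_mem_Ioc {t : ℕ → ℝ} (ht : 0 < t 0) {k : ℕ}
    (hdouble : ∀ n < k, 2 * t n < t (n + 1)) :
    (-1) ^ k * ∑ n ∈ Finset.range k, (-1) ^ n * t n ∈ Set.Ioc (-(t k / 2)) 0 := by
  induction k with
  | zero => simpa using ht
  | succ k ih =>
    have hih := ih fun n hn ↦ hdouble n (hn.trans k.lt_succ_self)
    have hpeel : (-1) ^ (k + 1) * ∑ n ∈ Finset.range (k + 1), (-1) ^ n * t n =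
        -((-1) ^ k * ∑ n ∈ Finset.range k, (-1) ^ n * t n) - t k := by
      have hsq : ((-1 : ℝ) ^ k) ^ 2 = 1 := by rw [← pow_mul, mul_comm, pow_mul, neg_one_sq, one_pow]
      rw [Finset.sum_range_succ]
      linear_combination -t k * hsq
    rw [hpeel]
    constructor <;> linarith [hih.1, hih.2, hdouble k k.lt_succ_self]

theorem sum_alternating_pos_of_dominant {t : ℕ → ℝ} (ht : ∀ n, 0 < t n) {k : ℕ}
    (hdouble : ∀ n < k, 2 * t n < t (n + 1)) (hhalve : ∀ n, k ≤ n → t (n + 1) ≤ t n / 2) (m : ℕ) :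
    0 < (-1) ^ k * ∑ n ∈ Finset.range (k + (m + 1)), (-1) ^ n * t n := by
  have hanti : Antitone fun n ↦ t (k + n) :=
    antitone_nat_of_succ_le fun n ↦
      (hhalve (k + n) (Nat.le_add_right k n)).trans (half_le_self (ht (k + n)).le)
  have hleft := sum_alternating_mem_Ioc (ht 0) hdouble
  have hright := sum_alternating_mem_Icc (fun n ↦ (ht (k + n)).le) hanti m
  rw [add_zero] at hright
  have hsplit : (-1) ^ k * ∑ n ∈ Finset.range (k + (m + 1)), (-1) ^ n * t n =
      (-1) ^ k * ∑ n ∈ Finset.range k, (-1) ^ n * t n +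
        ∑ n ∈ Finset.range (m + 1), (-1) ^ n * t (k + n) := by
    rw [Finset.sum_range_add, mul_add, Finset.mul_sum (Finset.range (m + 1))]
    congr 1
    refine Finset.sum_congr rfl fun n _ ↦ ?_
    rw [pow_add, ← mul_assoc, ← mul_assoc, ← mul_pow, neg_one_mul, neg_neg, one_pow, one_mul]
  rw [hsplit]
  linarith [hleft.1, hright.1, hhalve k le_rfl]

variable {a : ℕ → ℝ}

theorem four_mul_div_lt_div (ha : ∀ n, 0 < a n)
    (h4 : ∀ n, 4 * (a n * a (n + 2)) < a (n + 1) ^ 2) (n : ℕ) :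
    4 * (a (n + 2) / a (n + 1)) < a (n + 1) / a n := by
  rw [← mul_div_assoc, div_lt_div_iff₀ (ha _) (ha _)]
  linarith [h4 n]

-- At `x = a k / (2 * a (k + 1))` the `k`-th term is at least twice each of its neighbours.
theorem sum_alternating_pos_of_four_mul_lt_sq (ha : ∀ n, 0 < a n)
    (h4 : ∀ n, 4 * (a n * a (n + 2)) < a (n + 1) ^ 2) (k m : ℕ) :
    0 < (-1) ^ k * ∑ n ∈ Finset.range (k + (m + 1)),
      (-1) ^ n * (a n * (a k / (2 * a (k + 1))) ^ n) := by
  set d : ℕ → ℝ := fun n ↦ a (n + 1) / a n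
  set x : ℝ := a k / (2 * a (k + 1))
  have hx : 0 < x := div_pos (ha k) (mul_pos two_pos (ha (k + 1)))
  have hdk : d k * x = 1 / 2 := by
    have := (ha k).ne'
    have := (ha (k + 1)).ne'
    simp only [d, x]
    field_simp
  have hd4 (n : ℕ) : 4 * d (n + 1) < d n := four_mul_div_lt_div ha h4 n
  have hd (n : ℕ) : 0 < d n := div_pos (ha _) (ha _)
  have hanti : Antitone d := antitone_nat_of_succ_le fun n ↦ by linarith [hd4 n, hd (n + 1)]
  have hratio (n : ℕ) : a (n + 1) * x ^ (n + 1) = a n * x ^ n * (d n * x) := by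
    have := (ha n).ne'
    simp only [d, pow_succ]
    field_simp
  have hterm (n : ℕ) : 0 < a n * x ^ n := mul_pos (ha n) (pow_pos hx n)
  refine sum_alternating_pos_of_dominant hterm (fun n hn ↦ ?_) (fun n hn ↦ ?_) m
  · have hdn : 4 * d k < d n := by linarith [hd4 n, hanti (Nat.succ_le_of_lt hn)]
    have hdnx : 2 < d n * x := by linarith [mul_lt_mul_of_pos_right hdn hx]
    rw [hratio, mul_comm]
    exact mul_lt_mul_of_pos_left hdnx (hterm n)
  · have hdnx : d n * x ≤ 1 / 2 := hdk ▸ mul_le_mul_of_nonneg_right (hanti hn) hx.le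
    rw [hratio, ← mul_one_div]
    exact mul_le_mul_of_nonneg_left hdnx (hterm n).le

theorem IsPosRootedLimit.of_four_mul_lt_sq (ha : ∀ n, 0 < a n)
    (h4 : ∀ n, 4 * (a n * a (n + 2)) < a (n + 1) ^ 2) :
    IsPosRootedLimit (PowerSeries.mk fun n ↦ (-1) ^ n * a n) := by
  set f : ℝ⟦X⟧ := PowerSeries.mk fun n ↦ (-1) ^ n * a n with hf
  have hmono : StrictMono fun k ↦ a k / (2 * a (k + 1)) := strictMono_nat_of_lt_succ fun n ↦ by
    have h := ha n; have h1 := ha (n + 1); have h2 := ha (n + 2)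
    rw [div_lt_div_iff₀ (by positivity) (by positivity)]
    linarith [h4 n, mul_pos h h2]
  refine ⟨fun N ↦ PowerSeries.trunc (N + 1) f, fun N ↦ ?_, fun n ↦ ?_, fun N n ↦ ?_⟩
  · refine PosRooted.of_alternating_signs (Nat.lt_succ_iff.mp (PowerSeries.natDegree_trunc_lt f N))
      hmono (div_pos (ha 0) (mul_pos two_pos (ha 1))).le fun k hk ↦ ?_
    obtain ⟨m, rfl⟩ := Nat.exists_eq_add_of_le hk
    rw [Polynomial.eval, PowerSeries.eval₂_trunc_eq_sum_range]
    simpa only [hf, PowerSeries.coeff_mk, RingHom.id_apply, mul_assoc, add_assoc] using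
      sum_alternating_pos_of_four_mul_lt_sq ha h4 k m
  · refine tendsto_const_nhds.congr' ?_
    filter_upwards [eventually_ge_atTop n] with N hN
    rw [Polynomial.coeff_coe, PowerSeries.coeff_trunc, if_pos (Nat.lt_succ_of_le hN)]
  · rw [Polynomial.coeff_coe, PowerSeries.coeff_trunc]
    split_ifs
    · rfl
    · simp

end Hutchinson

section QBinomial

/-- The finite q-Pochhammer symbol `(q; q)_m`. -/
noncomputable def qPochFin (q : ℝ) (m : ℕ) : ℝ :=
  ∏ i ∈ Finset.range m, (1 - q ^ (i + 1))

/-- The Gaussian binomial coefficient. For `N < m` the factor `i = N` of the numerator vanishes, so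
the truncated subtraction gives the usual value `0`. -/
noncomputable def qBinom (q : ℝ) (N m : ℕ) : ℝ :=
  (∏ i ∈ Finset.range m, (1 - q ^ (N - i))) / qPochFin q m

variable {q : ℝ}

theorem qPochFin_succ (q : ℝ) (m : ℕ) : qPochFin q (m + 1) = qPochFin q m * (1 - q ^ (m + 1)) :=
  Finset.prod_range_succ _ m

theorem qPochFin_pos (hq0 : 0 ≤ q) (hq1 : q < 1) (m : ℕ) : 0 < qPochFin q m :=
  Finset.prod_pos fun i _ ↦ sub_pos.mpr (pow_lt_one₀ hq0 hq1 i.succ_ne_zero)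

theorem qBinom_zero_right (q : ℝ) (N : ℕ) : qBinom q N 0 = 1 := by
  simp [qBinom, qPochFin]

theorem qBinom_eq_zero_of_lt (q : ℝ) {N m : ℕ} (h : N < m) : qBinom q N m = 0 := by
  rw [qBinom, Finset.prod_eq_zero (Finset.mem_range.mpr h) (by simp), zero_div]

theorem qBinom_self (hq0 : 0 ≤ q) (hq1 : q < 1) (m : ℕ) : qBinom q m m = 1 := by
  rw [qBinom, div_eq_one_iff_eq (qPochFin_pos hq0 hq1 m).ne', qPochFin,
    ← Finset.prod_range_reflect]
  refine Finset.prod_congr rfl fun i hi ↦ ?_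
  rw [show m - (m - 1 - i) = i + 1 by have := Finset.mem_range.mp hi; lia]

theorem qBinom_succ_succ (hq0 : 0 ≤ q) (hq1 : q < 1) (N m : ℕ) :
    qBinom q (N + 1) (m + 1) = q ^ (m + 1) * qBinom q N (m + 1) + qBinom q N m := by
  rcases lt_or_ge N m with hlt | hge
  · simp only [qBinom_eq_zero_of_lt q hlt, qBinom_eq_zero_of_lt q (Nat.lt_succ_of_lt hlt),
      qBinom_eq_zero_of_lt q (Nat.succ_lt_succ hlt), mul_zero, add_zero]
  · have hm := (qPochFin_pos hq0 hq1 m).ne'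
    have hfac : 1 - q ^ (m + 1) ≠ 0 := (sub_pos.mpr (pow_lt_one₀ hq0 hq1 m.succ_ne_zero)).ne'
    have hpow : q ^ (N + 1) = q ^ (m + 1) * q ^ (N - m) := by
      rw [← pow_add]
      congr 1
      lia
    rw [qBinom, qBinom, qBinom, Finset.prod_range_succ', Finset.prod_range_succ, qPochFin_succ]
    simp only [Nat.add_sub_add_right, Nat.sub_zero, hpow]
    field_simp
    ring

theorem qBinom_pos (hq0 : 0 ≤ q) (hq1 : q < 1) {N m : ℕ} (h : m ≤ N) : 0 < qBinom q N m :=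
  div_pos (Finset.prod_pos fun _ hi ↦ sub_pos.mpr (pow_lt_one₀ hq0 hq1
    (Nat.sub_ne_zero_of_lt ((Finset.mem_range.mp hi).trans_le h)))) (qPochFin_pos hq0 hq1 m)

theorem qBinom_nonneg (hq0 : 0 ≤ q) (hq1 : q < 1) (N m : ℕ) : 0 ≤ qBinom q N m :=
  div_nonneg (Finset.prod_nonneg fun _ _ ↦ sub_nonneg.mpr (pow_le_one₀ hq0 hq1.le))
    (qPochFin_pos hq0 hq1 m).le

theorem qBinom_le (hq0 : 0 ≤ q) (hq1 : q < 1) (N m : ℕ) : qBinom q N m ≤ (qPochFin q m)⁻¹ := by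
  rw [qBinom, div_eq_mul_inv]
  refine mul_le_of_le_one_left (inv_nonneg.mpr (qPochFin_pos hq0 hq1 m).le) ?_
  exact Finset.prod_le_one (fun _ _ ↦ sub_nonneg.mpr (pow_le_one₀ hq0 hq1.le))
    fun _ _ ↦ sub_le_self 1 (pow_nonneg hq0 _)

theorem norm_mul_qBinom_le (hq0 : 0 ≤ q) (hq1 : q < 1) (r : ℝ) (N m : ℕ) :
    ‖r * qBinom q N m‖ ≤ ‖r * (qPochFin q m)⁻¹‖ := by
  have hle := qBinom_le hq0 hq1 N m
  rw [norm_mul, norm_mul, Real.norm_of_nonneg (qBinom_nonneg hq0 hq1 N m),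
    Real.norm_of_nonneg ((qBinom_nonneg hq0 hq1 N m).trans hle)]
  exact mul_le_mul_of_nonneg_left hle (norm_nonneg r)

theorem tendsto_qBinom (hq0 : 0 ≤ q) (hq1 : q < 1) (m : ℕ) :
    Tendsto (fun N ↦ qBinom q N m) atTop (𝓝 (qPochFin q m)⁻¹) := by
  have hfac (i : ℕ) : Tendsto (fun N : ℕ ↦ 1 - q ^ (N - i)) atTop (𝓝 1) := by
    simpa using ((tendsto_pow_atTop_nhds_zero_of_lt_one hq0 hq1).comp
      (tendsto_sub_atTop_nat i)).const_sub 1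
  have hprod := tendsto_finsetProd (Finset.range m) fun i _ ↦ hfac i
  simpa only [qBinom, Finset.prod_const_one, one_div] using hprod.div_const (qPochFin q m)

end QBinomial

section QTrig

/-- The power series with sum `cos_q √z`, for Jackson's `q`-cosine with quadratic exponents
`q ^ (n * (n - 1))`. -/
noncomputable def qCosSeries (q : ℝ) : ℝ⟦X⟧ :=
  PowerSeries.mk fun n ↦ (-1) ^ n * q ^ (n * (n - 1)) * (qPochFin q (2 * n))⁻¹

/-- The power series with sum `sin_q √z / √z`. -/
noncomputable def qSinSeries (q : ℝ) : ℝ⟦X⟧ :=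
  PowerSeries.mk fun n ↦ (-1) ^ n * q ^ (n * (n - 1)) * (qPochFin q (2 * n + 1))⁻¹

/-- Polynomials `(c, b)` such that `c (z ^ 2)` and `z * b (z ^ 2)` approximate the `q`-cosine and
the `q`-sine. The recursion is the discrete analogue of `cos' = -sin`, `sin' = cos`. -/
noncomputable def qTrigPoly (q : ℝ) : ℕ → ℝ[X] × ℝ[X]
  | 0 => (1, 1)
  | K + 1 =>
    let c := (qTrigPoly q K).1.comp (Polynomial.C (q ^ 2) * Polynomial.X) -
      Polynomial.X * (qTrigPoly q K).2.comp (Polynomial.C (q ^ 2) * Polynomial.X)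
    (c, Polynomial.C q * (qTrigPoly q K).2.comp (Polynomial.C (q ^ 2) * Polynomial.X) + c)

variable {q : ℝ}

theorem succ_mul_eq_mul_pred_add (n : ℕ) : (n + 1) * n = n * (n - 1) + 2 * n := by
  cases n with
  | zero => rfl
  | succ n =>
    rw [Nat.add_sub_cancel]
    ring

theorem coeff_qTrigPoly (hq0 : 0 ≤ q) (hq1 : q < 1) (K n : ℕ) :
    (qTrigPoly q K).1.coeff n = (-1) ^ n * q ^ (n * (n - 1)) * qBinom q (K + n) (2 * n) ∧
      (qTrigPoly q K).2.coeff n =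
        (-1) ^ n * q ^ (n * (n - 1)) * qBinom q (K + n + 1) (2 * n + 1) := by
  induction K generalizing n with
  | zero =>
    rcases n.eq_zero_or_pos with rfl | hn
    · simp [qTrigPoly, qBinom_self hq0 hq1]
    · rw [qBinom_eq_zero_of_lt q (by lia), qBinom_eq_zero_of_lt q (by lia)]
      simp [qTrigPoly, Polynomial.coeff_one, hn.ne']
  | succ K ih =>
    have hc : (qTrigPoly q (K + 1)).1.coeff n =
        (-1) ^ n * q ^ (n * (n - 1)) * qBinom q (K + 1 + n) (2 * n) := by
      cases n with
      | zero => simp [qTrigPoly, ih, qBinom_zero_right, -map_pow]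
      | succ n =>
        rw [show K + 1 + (n + 1) = K + n + 1 + 1 by ring, show 2 * (n + 1) = 2 * n + 1 + 1 by ring,
          qBinom_succ_succ hq0 hq1]
        simp only [qTrigPoly, Polynomial.coeff_sub, Polynomial.coeff_X_mul,
          Polynomial.comp_C_mul_X_coeff, (ih _).1, (ih _).2, Nat.add_sub_cancel,
          succ_mul_eq_mul_pred_add]
        ring_nf
    refine ⟨hc, ?_⟩
    rw [show K + 1 + n + 1 = (K + n + 1) + 1 by ring, qBinom_succ_succ hq0 hq1]
    simp only [qTrigPoly] at hc ⊢
    rw [Polynomial.coeff_add, hc, Polynomial.coeff_C_mul, Polynomial.comp_C_mul_X_coeff, (ih n).2,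
      show K + 1 + n = K + n + 1 by ring]
    ring

-- A Hermite–Biehler type argument: `c (z ^ 2) + i * z * b (z ^ 2)` has no zero in a half-plane.
theorem im_qTrigPoly_mul_conj_neg (hq : 0 < q) (K : ℕ) {z : ℂ} (hz : 0 < z.im) :
    (Polynomial.aeval (z ^ 2) (qTrigPoly q K).1 *
      conj (z * Polynomial.aeval (z ^ 2) (qTrigPoly q K).2)).im < 0 := by
  induction K generalizing z with
  | zero => simpa [qTrigPoly] using hz
  | succ K ih =>
    have hih := ih (z := q * z) (by simpa using mul_pos hq hz)
    set c := Polynomial.aeval ((q * z : ℂ) ^ 2) (qTrigPoly q K).1 with hc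
    set b := Polynomial.aeval ((q * z : ℂ) ^ 2) (qTrigPoly q K).2 with hb
    have hc' : Polynomial.aeval (z ^ 2) (qTrigPoly q (K + 1)).1 = c - z ^ 2 * b := by
      simp [qTrigPoly, Polynomial.aeval_comp, hc, hb, mul_pow]
    have hb' : Polynomial.aeval (z ^ 2) (qTrigPoly q (K + 1)).2 = q * b + (c - z ^ 2 * b) := by
      simp [qTrigPoly, Polynomial.aeval_comp, hc, hb, mul_pow]
    have hexpand : (c - z ^ 2 * b) * conj (z * (q * b + (c - z ^ 2 * b))) =
        c * conj (q * z * b) + conj z * (Complex.normSq (c - z ^ 2 * b) : ℝ) -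
          z * (q * Complex.normSq (z * b) : ℝ) := by
      push_cast
      rw [← Complex.mul_conj, ← Complex.mul_conj]
      simp only [map_mul, map_add, map_sub, Complex.conj_ofReal]
      ring
    have him : ((c - z ^ 2 * b) * conj (z * (q * b + (c - z ^ 2 * b)))).im =
        (c * conj (q * z * b)).im -
          z.im * (Complex.normSq (c - z ^ 2 * b) + q * Complex.normSq (z * b)) := by
      rw [hexpand, Complex.sub_im, Complex.add_im, Complex.im_mul_ofReal, Complex.im_mul_ofReal,
        Complex.conj_im]
      ring
    have hnonneg : 0 ≤ z.im * (Complex.normSq (c - z ^ 2 * b) + q * Complex.normSq (z * b)) :=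
      mul_nonneg hz.le (add_nonneg (Complex.normSq_nonneg _)
        (mul_nonneg hq.le (Complex.normSq_nonneg _)))
    rw [hc', hb', him]
    linarith

theorem PosRooted.of_aeval_sq_ne_zero {P : ℝ[X]} (hP0 : P.coeff 0 ≠ 0)
    (hP : ∀ z : ℂ, 0 < z.im → Polynomial.aeval (z ^ 2) P ≠ 0) : PosRooted P := by
  intro w hw
  obtain ⟨z, rfl⟩ := IsAlgClosed.exists_pow_nat_eq w two_pos
  have hle : z.im ≤ 0 := not_lt.mp fun h ↦ hP z h hw
  have hge : 0 ≤ z.im := by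
    by_contra! h
    exact hP (-z) (by simpa using h) (by rwa [neg_sq])
  obtain ⟨x, rfl⟩ : ∃ x : ℝ, (x : ℂ) = z :=
    ⟨z.re, Complex.ext rfl (by rw [Complex.ofReal_im]; exact hge.antisymm hle)⟩
  have hx : x ≠ 0 := by
    rintro rfl
    rw [Complex.ofReal_zero, zero_pow two_ne_zero, ← Polynomial.coeff_zero_eq_aeval_zero',
      map_eq_zero] at hw
    exact hP0 hw
  exact_mod_cast (Complex.zero_lt_real.mpr (sq_pos_of_ne_zero hx))

theorem isPosRootedLimit_qCosSeries (hq0 : 0 < q) (hq1 : q < 1) :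
    IsPosRootedLimit (qCosSeries q) := by
  refine ⟨fun K ↦ (qTrigPoly q K).1, fun K ↦ ?_, fun n ↦ ?_, fun K n ↦ ?_⟩
  · refine PosRooted.of_aeval_sq_ne_zero ?_ fun z hz h ↦ ?_
    · simp [coeff_qTrigPoly hq0.le hq1, qBinom_zero_right]
    · simpa only [h, zero_mul, Complex.zero_im, lt_self_iff_false] using
        im_qTrigPoly_mul_conj_neg hq0 K hz
  · simp only [Polynomial.coeff_coe, (coeff_qTrigPoly hq0.le hq1 _ n).1, qCosSeries,
      PowerSeries.coeff_mk]
    exact ((tendsto_qBinom hq0.le hq1 _).comp (tendsto_add_atTop_nat n)).const_mul _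
  · rw [Polynomial.coeff_coe, (coeff_qTrigPoly hq0.le hq1 K n).1, qCosSeries, PowerSeries.coeff_mk]
    exact norm_mul_qBinom_le hq0.le hq1 _ _ _

theorem isPosRootedLimit_qSinSeries (hq0 : 0 < q) (hq1 : q < 1) :
    IsPosRootedLimit (qSinSeries q) := by
  refine ⟨fun K ↦ (qTrigPoly q K).2, fun K ↦ ?_, fun n ↦ ?_, fun K n ↦ ?_⟩
  · refine PosRooted.of_aeval_sq_ne_zero ?_ fun z hz h ↦ ?_
    · rw [(coeff_qTrigPoly hq0.le hq1 K 0).2]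
      simpa using (qBinom_pos hq0.le hq1 (Nat.le_add_left 1 K)).ne'
    · simpa only [h, mul_zero, map_zero, Complex.zero_im, lt_self_iff_false] using
        im_qTrigPoly_mul_conj_neg hq0 K hz
  · simp only [Polynomial.coeff_coe, (coeff_qTrigPoly hq0.le hq1 _ n).2, qSinSeries,
      PowerSeries.coeff_mk]
    exact ((tendsto_qBinom hq0.le hq1 _).comp (tendsto_add_atTop_nat (n + 1))).const_mul _
  · rw [Polynomial.coeff_coe, (coeff_qTrigPoly hq0.le hq1 K n).2, qSinSeries, PowerSeries.coeff_mk]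
    exact norm_mul_qBinom_le hq0.le hq1 _ _ _

end QTrig

section QGamma

variable {q : ℝ}

theorem summable_norm_neg_mul_pow (hq0 : 0 < q) (hq1 : q < 1) (a : ℝ) :
    Summable fun k : ℕ ↦ ‖-(a * q ^ k)‖ :=
  ((summable_geometric_of_lt_one hq0.le hq1).mul_left a).neg.norm

theorem qPochInf_eq_mul (hq0 : 0 < q) (hq1 : q < 1) (a : ℝ) :
    qPochInf a q = (1 - a) * qPochInf (a * q) q := by
  have hshift (k : ℕ) : 1 - a * q ^ (k + 1) = 1 - a * q * q ^ k := by ring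
  have hmul : Multipliable fun k : ℕ ↦ 1 - a * q ^ (k + 1) := by
    simp only [hshift]
    have h := multipliable_one_add_of_summable (summable_norm_neg_mul_pow hq0 hq1 (a * q))
    simpa only [← sub_eq_add_neg] using h
  have htail := tprod_eq_zero_mul' (f := fun k : ℕ ↦ 1 - a * q ^ k) hmul
  unfold qPochInf
  rw [htail]
  simp only [hshift, pow_zero, mul_one]

theorem qPochInf_ne_zero (hq0 : 0 < q) (hq1 : q < 1) {a : ℝ} (ha : a < 1) :
    qPochInf a q ≠ 0 := by
  have hfac (k : ℕ) : 1 + -(a * q ^ k) ≠ 0 := by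
    have hlt : a * q ^ k < q ^ k := mul_lt_of_lt_one_left (pow_pos hq0 k) ha
    linarith [pow_le_one₀ hq0.le hq1.le (n := k)]
  simpa only [qPochInf, sub_eq_add_neg] using
    tprod_one_add_ne_zero_of_summable hfac (summable_norm_neg_mul_pow hq0 hq1 a)

theorem qGamma_ne_zero (hq0 : 0 < q) (hq1 : q < 1) {x : ℝ} (hx : 0 < x) : qGamma q x ≠ 0 :=
  div_ne_zero (mul_ne_zero (qPochInf_ne_zero hq0 hq1 hq1)
    (Real.rpow_pos_of_pos (sub_pos.mpr hq1) _).ne')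
    (qPochInf_ne_zero hq0 hq1 (Real.rpow_lt_one hq0.le hq1 hx))

theorem qGamma_one (hq0 : 0 < q) (hq1 : q < 1) : qGamma q 1 = 1 := by
  rw [qGamma, sub_self, Real.rpow_zero, mul_one, Real.rpow_one,
    div_self (qPochInf_ne_zero hq0 hq1 hq1)]

theorem qGamma_add_one (hq0 : 0 < q) (hq1 : q < 1) {x : ℝ} (hx : 0 < x) :
    qGamma q (x + 1) = (1 - q ^ x) / (1 - q) * qGamma q x := by
  have hqx : q ^ x < 1 := Real.rpow_lt_one hq0.le hq1 hx
  have hne := qPochInf_ne_zero hq0 hq1 hqx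
  rw [qPochInf_eq_mul hq0 hq1] at hne
  have hpow : (1 - q) ^ (1 - x) = (1 - q) ^ (1 - (x + 1)) * (1 - q) := by
    rw [← Real.rpow_add_one (sub_pos.mpr hq1).ne']
    ring_nf
  have hq : 1 - q ≠ 0 := (sub_pos.mpr hq1).ne'
  have hqx0 := left_ne_zero_of_mul hne
  have := right_ne_zero_of_mul hne
  rw [qGamma, qGamma, hpow, qPochInf_eq_mul hq0 hq1 (q ^ x), Real.rpow_add_one hq0.ne']
  field_simp

theorem qGamma_natCast_add_one (hq0 : 0 < q) (hq1 : q < 1) (m : ℕ) :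
    qGamma q (m + 1) = qPochFin q m / (1 - q) ^ m := by
  induction m with
  | zero => simp [qGamma_one hq0 hq1, qPochFin]
  | succ m ih =>
    rw [qGamma_add_one hq0 hq1 (by positivity), Real.rpow_natCast, Nat.cast_succ, ih,
      qPochFin_succ, div_mul_div_comm, ← pow_succ', mul_comm]

theorem one_sub_rpow_pos (hq0 : 0 < q) (hq1 : q < 1) {x : ℝ} (hx : 0 < x) : 0 < 1 - q ^ x :=
  sub_pos.mpr (Real.rpow_lt_one hq0.le hq1 hx)

end QGamma

section MittagLeffler

/-- The absolute values of the coefficients of the normalized `q`-Mittag-Leffler function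
`h z / z`. -/
noncomputable def mlCoeff (γ σ q : ℝ) (n : ℕ) : ℝ :=
  qGamma q (γ + 1) * (σ ^ (2 * n) * q ^ (n * (n - 1)) / qGamma q (2 * n + γ + 1))

/-- The ratio of consecutive values of `mlCoeff`. -/
noncomputable def mlRatio (γ σ q : ℝ) (n : ℕ) : ℝ :=
  σ ^ 2 * (1 - q) ^ 2 * q ^ (2 * n) / ((1 - q ^ (2 * n + γ + 1)) * (1 - q ^ (2 * n + γ + 2)))

/-- The power series of the normalized `q`-Mittag-Leffler function `h z / z`. -/
noncomputable def mlSeries (γ σ q : ℝ) : ℝ⟦X⟧ :=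
  PowerSeries.mk fun n ↦ (-1) ^ n * mlCoeff γ σ q n

variable {γ σ q : ℝ}

theorem mlCoeff_zero (hq0 : 0 < q) (hq1 : q < 1) (hγ : -1 < γ) : mlCoeff γ σ q 0 = 1 := by
  simp [mlCoeff, qGamma_ne_zero hq0 hq1 (neg_lt_iff_pos_add.mp hγ)]

theorem mlCoeff_succ (hq0 : 0 < q) (hq1 : q < 1) (hγ : -1 < γ) (n : ℕ) :
    mlCoeff γ σ q (n + 1) = mlRatio γ σ q n * mlCoeff γ σ q n := by
  have hx : 0 < 2 * n + γ + 1 := by linarith [n.cast_nonneg (α := ℝ)]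
  have hΓ : qGamma q (2 * (n + 1 : ℕ) + γ + 1) = (1 - q ^ (2 * n + γ + 2)) / (1 - q) *
      ((1 - q ^ (2 * n + γ + 1)) / (1 - q) * qGamma q (2 * n + γ + 1)) := by
    rw [← qGamma_add_one hq0 hq1 hx, show 2 * n + γ + 2 = 2 * n + γ + 1 + 1 by ring,
      ← qGamma_add_one hq0 hq1 (by linarith)]
    push_cast
    ring_nf
  rw [mlCoeff, mlCoeff, mlRatio, hΓ, Nat.add_sub_cancel,
    succ_mul_eq_mul_pred_add]
  simp only [div_eq_mul_inv, mul_inv, inv_inv]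
  ring

theorem one_sub_rpow_add_pos (hq0 : 0 < q) (hq1 : q < 1) (hγ : -1 < γ) {c : ℝ} (hc : 1 ≤ c)
    (n : ℕ) : 0 < 1 - q ^ (2 * n + γ + c) :=
  one_sub_rpow_pos hq0 hq1 (by linarith [n.cast_nonneg (α := ℝ)])

theorem mlRatio_pos (hq0 : 0 < q) (hq1 : q < 1) (hσ : σ ≠ 0) (hγ : -1 < γ) (n : ℕ) :
    0 < mlRatio γ σ q n := by
  have h1 := one_sub_rpow_add_pos hq0 hq1 hγ le_rfl n
  have h2 := one_sub_rpow_add_pos hq0 hq1 hγ one_le_two n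
  have := sub_pos.mpr hq1
  rw [mlRatio]
  positivity

theorem mlRatio_succ_lt (hq0 : 0 < q) (hq1 : q < 1) (hσ : σ ≠ 0) (hγ : -1 < γ) (n : ℕ) :
    mlRatio γ σ q (n + 1) < q ^ 2 * mlRatio γ σ q n := by
  have h1 := one_sub_rpow_add_pos hq0 hq1 hγ le_rfl n
  have h2 := one_sub_rpow_add_pos hq0 hq1 hγ one_le_two n
  have hlt (c : ℝ) : 1 - q ^ (2 * n + γ + c) < 1 - q ^ (2 * (n + 1 : ℕ) + γ + c) := by
    refine sub_lt_sub_left (Real.rpow_lt_rpow_of_exponent_gt hq0 hq1 ?_) 1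
    push_cast
    linarith
  have := sub_pos.mpr hq1
  have hnum : σ ^ 2 * (1 - q) ^ 2 * q ^ (2 * (n + 1)) =
      q ^ 2 * (σ ^ 2 * (1 - q) ^ 2 * q ^ (2 * n)) := by ring
  rw [mlRatio, mlRatio, ← mul_div_assoc, hnum]
  exact div_lt_div_of_pos_left (by positivity) (mul_pos h1 h2)
    (mul_lt_mul'' (hlt 1) (hlt 2) h1.le h2.le)

theorem mlCoeff_pos (hq0 : 0 < q) (hq1 : q < 1) (hσ : σ ≠ 0) (hγ : -1 < γ) (n : ℕ) :
    0 < mlCoeff γ σ q n := by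
  induction n with
  | zero => simp [mlCoeff_zero hq0 hq1 hγ]
  | succ n ih =>
    rw [mlCoeff_succ hq0 hq1 hγ]
    exact mul_pos (mlRatio_pos hq0 hq1 hσ hγ n) ih

theorem tendsto_mlRatio (hq0 : 0 < q) (hq1 : q < 1) (hσ : σ ≠ 0) (hγ : -1 < γ) :
    Tendsto (mlRatio γ σ q) atTop (𝓝 0) := by
  have hgeom : Tendsto (fun n : ℕ ↦ (q ^ 2) ^ n * mlRatio γ σ q 0) atTop (𝓝 0) := by
    simpa using (tendsto_pow_atTop_nhds_zero_of_lt_one (sq_nonneg q)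
      (pow_lt_one₀ hq0.le hq1 two_ne_zero)).mul_const (mlRatio γ σ q 0)
  exact squeeze_zero (fun n ↦ (mlRatio_pos hq0 hq1 hσ hγ n).le)
    (fun n ↦ le_geom (sq_nonneg q) n fun k _ ↦ (mlRatio_succ_lt hq0 hq1 hσ hγ k).le) hgeom

theorem isEntire_mlSeries (hq0 : 0 < q) (hq1 : q < 1) (hσ : σ ≠ 0) (hγ : -1 < γ) :
    IsEntire (mlSeries γ σ q) := by
  refine IsEntire.of_coeff_succ (d := fun n ↦ -mlRatio γ σ q n)
    (by simpa using (tendsto_mlRatio hq0 hq1 hσ hγ).neg) fun n ↦ ?_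
  rw [mlSeries, PowerSeries.coeff_mk, PowerSeries.coeff_mk, mlCoeff_succ hq0 hq1 hγ]
  ring

theorem mlSeries_zero_eq (hq0 : 0 < q) (hq1 : q < 1) :
    mlSeries 0 σ q = PowerSeries.rescale (σ ^ 2 * (1 - q) ^ 2) (qCosSeries q) := by
  ext n
  have hΓ := qGamma_natCast_add_one hq0 hq1 (2 * n)
  push_cast at hΓ
  rw [PowerSeries.coeff_rescale, qCosSeries, mlSeries, PowerSeries.coeff_mk, PowerSeries.coeff_mk,
    mlCoeff, add_zero, zero_add, qGamma_one hq0 hq1, hΓ, mul_pow, ← pow_mul, ← pow_mul]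
  simp only [div_eq_mul_inv, mul_inv, inv_inv]
  ring

theorem mlSeries_one_eq (hq0 : 0 < q) (hq1 : q < 1) :
    mlSeries 1 σ q =
      PowerSeries.C (1 - q) * PowerSeries.rescale (σ ^ 2 * (1 - q) ^ 2) (qSinSeries q) := by
  ext n
  have hΓ := qGamma_natCast_add_one hq0 hq1 (2 * n + 1)
  push_cast at hΓ
  have hΓ2 : qGamma q (1 + 1) = 1 := by
    have hq : 1 - q ≠ 0 := (sub_pos.mpr hq1).ne'
    rw [qGamma_add_one hq0 hq1 one_pos, qGamma_one hq0 hq1, Real.rpow_one, div_self hq, one_mul]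
  rw [PowerSeries.coeff_C_mul, PowerSeries.coeff_rescale, qSinSeries, mlSeries,
    PowerSeries.coeff_mk, PowerSeries.coeff_mk, mlCoeff, hΓ2, hΓ, mul_pow, ← pow_mul, ← pow_mul]
  simp only [div_eq_mul_inv, mul_inv, inv_inv]
  ring

theorem isPosRootedLimit_mlSeries_of_le_half (hq0 : 0 < q) (hq : q ≤ 1 / 2) (hσ : σ ≠ 0)
    (hγ : -1 < γ) : IsPosRootedLimit (mlSeries γ σ q) := by
  have hq1 : q < 1 := by linarith
  refine IsPosRootedLimit.of_four_mul_lt_sq (mlCoeff_pos hq0 hq1 hσ hγ) fun n ↦ ?_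
  have hratio : 4 * mlRatio γ σ q (n + 1) < mlRatio γ σ q n := by
    have hsq : 4 * q ^ 2 ≤ 1 := by nlinarith
    linarith [mlRatio_succ_lt hq0 hq1 hσ hγ n,
      mul_le_mul_of_nonneg_right hsq (mlRatio_pos hq0 hq1 hσ hγ n).le]
  have hmul := mul_lt_mul_of_pos_right hratio
    (mul_pos (mlCoeff_pos hq0 hq1 hσ hγ n) (mlCoeff_pos hq0 hq1 hσ hγ (n + 1)))
  calc 4 * (mlCoeff γ σ q n * mlCoeff γ σ q (n + 2))
      = 4 * mlRatio γ σ q (n + 1) * (mlCoeff γ σ q n * mlCoeff γ σ q (n + 1)) := by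
        rw [mlCoeff_succ hq0 hq1 hγ (n + 1)]
        ring
    _ < mlRatio γ σ q n * (mlCoeff γ σ q n * mlCoeff γ σ q (n + 1)) := hmul
    _ = mlCoeff γ σ q (n + 1) ^ 2 := by
        rw [← mul_assoc, ← mlCoeff_succ hq0 hq1 hγ, sq]

theorem isPosRootedLimit_mlSeries (hq0 : 0 < q) (hq1 : q < 1) (hσ : σ ≠ 0) (hγ : -1 < γ)
    (h : γ = 0 ∨ γ = 1 ∨ q ≤ 1 / 2) : IsPosRootedLimit (mlSeries γ σ q) := by
  have hκ : 0 < σ ^ 2 * (1 - q) ^ 2 :=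
    mul_pos (sq_pos_of_ne_zero hσ) (pow_pos (sub_pos.mpr hq1) 2)
  rcases h with rfl | rfl | hq
  · rw [mlSeries_zero_eq hq0 hq1]
    exact (isPosRootedLimit_qCosSeries hq0 hq1).rescale hκ
  · rw [mlSeries_one_eq hq0 hq1]
    exact ((isPosRootedLimit_qSinSeries hq0 hq1).rescale hκ).C_mul (sub_pos.mpr hq1).ne'
  · exact isPosRootedLimit_mlSeries_of_le_half hq0 hq hσ hγ

theorem hMLR_eq_seriesSum (hq0 : 0 < q) (hq1 : q < 1) (hσ : σ ≠ 0) (hγ : -1 < γ) :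
    hMLR γ σ q = seriesSum (PowerSeries.X * mlSeries γ σ q) := by
  funext x
  rw [seriesSum_X_mul (isEntire_mlSeries hq0 hq1 hσ hγ), seriesSum_real, hMLR, mul_assoc,
    ← tsum_mul_left]
  congr 2 with n
  rw [mlSeries, PowerSeries.coeff_mk, mlCoeff]
  ring

theorem hML_eq_seriesSum (hq0 : 0 < q) (hq1 : q < 1) (hσ : σ ≠ 0) (hγ : -1 < γ) :
    hML γ σ q = seriesSum (PowerSeries.X * mlSeries γ σ q) := by
  funext z
  rw [seriesSum_X_mul (isEntire_mlSeries hq0 hq1 hσ hγ), seriesSum, hML, mul_assoc,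
    ← tsum_mul_left]
  congr 2 with n
  rw [mlSeries, PowerSeries.coeff_mk, mlCoeff, RCLike.ofReal_eq_complex_ofReal]
  push_cast
  ring

theorem condR.eq_zero_or_eq_one_or_le_half (hq0 : 0 < q) (hq1 : q < 1) (h : condR q γ) :
    γ = 0 ∨ γ = 1 ∨ q ≤ 1 / 2 := by
  obtain (h | h) | ⟨hγ, -, h⟩ := h
  · exact .inl h
  · exact .inr (.inl h)
  · have hle (x : ℝ) : 1 - q ^ x ≤ 1 := sub_le_self 1 (Real.rpow_nonneg hq0.le x)
    have hnonneg := (one_sub_rpow_pos hq0 hq1 (x := γ + 2) (by linarith [hγ.1])).le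
    have hfac : (1 - q ^ (γ + 1)) * (1 - q ^ (γ + 2)) ≤ 1 := mul_le_one₀ (hle _) hnonneg (hle _)
    have hlt : 1 < q⁻¹ * (1 - q) := by
      rw [mul_assoc] at h
      exact h.trans_le (mul_le_of_le_one_right
        (mul_nonneg (inv_nonneg.mpr hq0.le) (sub_nonneg.mpr hq1.le)) hfac)
    rw [inv_mul_eq_div, one_lt_div hq0] at hlt
    exact .inr (.inr (by linarith))

end MittagLeffler

theorem stmt15_general (q σ γ α ς1 : ℝ) (hq0 : 0 < q) (hq1 : q < 1) (hσ : σ ≠ 0) (hγ : -1 < γ)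
    (h : γ = 0 ∨ γ = 1 ∨ q ≤ 1 / 2) (hα1 : α < 1)
    (hς1 : IsLeast {x : ℝ | 0 < x ∧ deriv (hMLR γ σ q) x = 0} ς1) :
    ∃ r₃ : ℝ,
      (r₃ ∈ Set.Ioo 0 ς1 ∧
        1 + r₃ * deriv (deriv (hMLR γ σ q)) r₃ / deriv (hMLR γ σ q) r₃ = α) ∧
      (∀ r : ℝ, r ∈ Set.Ioo 0 ς1 →
        1 + r * deriv (deriv (hMLR γ σ q)) r / deriv (hMLR γ σ q) r = α → r = r₃) ∧
      radiusConvex α (hML γ σ q) = r₃ := by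
  have hcoeff : 0 < PowerSeries.coeff 1 (PowerSeries.X * mlSeries γ σ q) := by
    simp [mlSeries, mlCoeff_pos hq0 hq1 hσ hγ]
  rw [hMLR_eq_seriesSum hq0 hq1 hσ hγ] at hς1 ⊢
  rw [hML_eq_seriesSum hq0 hq1 hσ hγ]
  exact existsUnique_radiusConvex (isEntire_mlSeries hq0 hq1 hσ hγ).X_mul hcoeff
    (isPosRootedLimit_mlSeries hq0 hq1 hσ hγ h).derivative_X_mul hα1 hς1

theorem stmt15 (q σ γ : ℝ) (hq0 : 0 < q) (hq1 : q < 1) (hσ : 0 < σ)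
    (hγ0 : 0 ≤ γ) (hγ2 : γ < 2) (hR : condR q γ)
    (α : ℝ) (hα0 : 0 ≤ α) (hα1 : α < 1)
    (ς1 : ℝ)
    (hς1 : IsLeast {x : ℝ | 0 < x ∧ deriv (hMLR γ σ q) x = 0} ς1) :
    ∃ r₃ : ℝ,
      (r₃ ∈ Set.Ioo 0 ς1 ∧
        1 + r₃ * deriv (deriv (hMLR γ σ q)) r₃ / deriv (hMLR γ σ q) r₃ = α) ∧
      (∀ r : ℝ, r ∈ Set.Ioo 0 ς1 →
        1 + r * deriv (deriv (hMLR γ σ q)) r / deriv (hMLR γ σ q) r = α → r = r₃) ∧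
      radiusConvex α (hML γ σ q) = r₃ :=
  stmt15_general q σ γ α ς1 hq0 hq1 hσ.ne' (neg_one_lt_zero.trans_le hγ0)
    (hR.eq_zero_or_eq_one_or_le_half hq0 hq1) hα1 hς1
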